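/- arXiv:1609.05007 — 4 statements merged into one kernel-verified Lean document; each statement's English description precedes it below -/
import Mathlib

section
/- Fix an integer r ≥ 2, rationals q_1,…,q_r ∈ (0,1) with q_1+⋯+q_r = 1, a rational α > 0, a real A > 0 and a real ε with 0 < ε < 1/6. Then there exist C > 0 and N₀ ∈ ℕ such that for every N ≥ N₀ and M ∈ ℕ with α·M = N, every K : Fin r → ℕ with K_i = q_i·M for every i, and every n : Fin r → ℕ with ∑_i n_i = N satisfying |n_i − N·q_i| ≤ A·N^{2/3−ε} for every i, one has |P^B(n|K) − G| ≤ C·N^{−3ε}·G, where G = exp(−N·∑_i (n_i/N − q_i)²/(2(1+α) q_i)) / ((2π(1+α)N)^{(r−1)/2} · ∏_i √q_i). -/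
open Finset

/-- The bosonic counting probability
`P^B(n|K) = (N!/∏ᵢ nᵢ!) ⬝ ((M-1)!/(M+N-1)!) ⬝ ∏ᵢ (Kᵢ+nᵢ-1)!/(Kᵢ-1)!`
with `M = ∑ᵢ Kᵢ` and `N = ∑ᵢ nᵢ`. -/
noncomputable def PB {r : ℕ} (M : ℕ) (n K : Fin r → ℕ) : ℝ :=
  ((∑ i, n i).factorial : ℝ) / (∏ i, ((n i).factorial : ℝ)) *
    (((M - 1).factorial : ℝ) / ((M + (∑ i, n i) - 1).factorial : ℝ)) *
    ∏ i, ((K i + n i - 1).factorial : ℝ) / ((K i - 1).factorial : ℝ)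

/-- The asymptotic Gaussian for the bosonic case at particle density `α = N/M`. -/
noncomputable def GaussB {r : ℕ} (N : ℕ) (n : Fin r → ℕ) (q : Fin r → ℚ) (α : ℚ) : ℝ :=
  Real.exp (-(N : ℝ) *
      ∑ i, ((n i : ℝ) / (N : ℝ) - (q i : ℝ)) ^ 2 / (2 * (1 + (α : ℝ)) * (q i : ℝ))) /
    ((2 * Real.pi * (1 + (α : ℝ)) * N) ^ (((r : ℝ) - 1) / 2) * ∏ i, Real.sqrt (q i : ℝ))

/-!
The bosonic probability is the ratio `∏ᵢ multichoose Kᵢ nᵢ / multichoose M N` of numbers of bosonic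
states. Stirling's formula expands the logarithm of each factor to second order in the deviation
`dᵢ = nᵢ - N qᵢ`. The entropy terms `x log x` cancel because `∑ᵢ qᵢ = 1`, the linear terms because
`∑ᵢ dᵢ = 0`; the terms `(log x) / 2` leave the normalisation of the Gaussian, and the coefficient
of `-dᵢ² / 2` is the inverse variance `1 / (N qᵢ) - 1 / ((N + M) qᵢ) = 1 / ((1 + α) N qᵢ)`.
For deviations of size `D = A N^(2/3 - ε)` the cubic remainder `D³ / N²` is of order `N^(-3ε)`,
which dominates the other errors `D / N` and `1 / N` as long as `ε ≤ 1/6`.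
-/

open Filter Real Stirling
open scoped Nat

theorem log_stirlingSeq_le {n : ℕ} (hn : n ≠ 0) :
    log (stirlingSeq n) ≤ log √π + 1 / (12 * n) := by
  have hmono : Monotone fun k : ℕ ↦ log (stirlingSeq (k + 1)) - 1 / (12 * (k + 1 : ℝ)) := by
    refine monotone_nat_of_le_succ fun k ↦ ?_
    have hstep := log_stirlingSeq_sdiff_le (k + 1)
    have htelescope : 1 / (12 * (k + 1 : ℝ) * (k + 1 + 1)) =
        1 / (12 * (k + 1 : ℝ)) - 1 / (12 * (k + 1 + 1)) := by
      field_simp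
      ring
    push_cast at hstep ⊢
    linarith
  have hseq : Tendsto (fun k : ℕ ↦ log (stirlingSeq (k + 1))) atTop (nhds (log √π)) :=
    ((tendsto_add_atTop_iff_nat 1).2 tendsto_stirlingSeq_sqrt_pi).log (by positivity)
  have hcorr : Tendsto (fun k : ℕ ↦ 1 / (12 * (k + 1 : ℝ))) atTop (nhds 0) := by
    simpa [mul_comm] using
      (tendsto_one_div_add_atTop_nhds_zero_nat (𝕜 := ℝ)).const_mul (1 / 12 : ℝ)
  obtain ⟨k, rfl⟩ := Nat.exists_eq_succ_of_ne_zero hn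
  have hle := hmono.ge_of_tendsto (hseq.sub hcorr) k
  push_cast
  linarith

/-- Stirling's approximation to `log x!`, extended to real `x > 0`. -/
noncomputable def stirlingLog (x : ℝ) : ℝ :=
  x * log x - x + log x / 2 + log (2 * π) / 2

theorem log_factorial_le_stirlingLog_add {n : ℕ} (hn : n ≠ 0) :
    log (n ! : ℝ) ≤ stirlingLog n + 1 / (12 * n) := by
  have hn' : (n : ℝ) ≠ 0 := Nat.cast_ne_zero.2 hn
  have hseq := log_stirlingSeq_le hn
  rw [log_stirlingSeq_formula, log_mul two_ne_zero hn', log_div hn' (exp_ne_zero 1), log_exp,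
    log_sqrt pi_pos.le] at hseq
  rw [stirlingLog, log_mul two_ne_zero pi_ne_zero]
  linarith

theorem abs_log_factorial_sub_stirlingLog_le {n : ℕ} (hn : n ≠ 0) :
    |log (n ! : ℝ) - stirlingLog n| ≤ 1 / (12 * n) := by
  have hlower : stirlingLog n ≤ log (n ! : ℝ) := le_log_factorial_stirling hn
  rw [abs_of_nonneg (sub_nonneg.2 hlower)]
  linarith [log_factorial_le_stirlingLog_add hn]

theorem abs_log_one_add_le {t : ℝ} (ht : |t| ≤ 1 / 2) : |log (1 + t)| ≤ 2 * |t| := by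
  have hbound := abs_log_sub_add_sum_range_le (x := -t) (by rw [abs_neg]; linarith) 0
  simp only [sum_range_zero, zero_add, pow_one, abs_neg, sub_neg_eq_add] at hbound
  refine hbound.trans ((div_le_iff₀ (by linarith)).2 ?_)
  nlinarith [abs_nonneg t]

theorem abs_log_one_add_sub_quadratic_le {t : ℝ} (ht : |t| ≤ 1 / 2) :
    |log (1 + t) - (t - t ^ 2 / 2)| ≤ 2 * |t| ^ 3 := by
  have hbound := abs_log_sub_add_sum_range_le (x := -t) (by rw [abs_neg]; linarith) 2
  have hsum : ∑ i ∈ range 2, (-t) ^ (i + 1) / ((i : ℝ) + 1) + log (1 - -t) =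
      log (1 + t) - (t - t ^ 2 / 2) := by
    norm_num [sum_range_succ]
    ring
  rw [hsum, abs_neg] at hbound
  refine hbound.trans ((div_le_iff₀ (by linarith)).2 ?_)
  norm_num
  nlinarith [pow_nonneg (abs_nonneg t) 3]

theorem abs_one_add_mul_log_one_add_sub_quadratic_le {t : ℝ} (ht : |t| ≤ 1 / 2) :
    |(1 + t) * log (1 + t) - (t + t ^ 2 / 2)| ≤ 4 * |t| ^ 3 := by
  have hsplit : (1 + t) * log (1 + t) - (t + t ^ 2 / 2) =
      (1 + t) * (log (1 + t) - (t - t ^ 2 / 2)) - t ^ 3 / 2 := by ring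
  have hfactor : |1 + t| ≤ 3 / 2 := by
    rw [abs_le] at ht ⊢
    constructor <;> linarith
  calc |(1 + t) * log (1 + t) - (t + t ^ 2 / 2)|
      ≤ |1 + t| * |log (1 + t) - (t - t ^ 2 / 2)| + |t| ^ 3 / 2 := by
        rw [hsplit]
        refine (abs_sub _ _).trans_eq ?_
        rw [abs_mul, abs_div, abs_pow, abs_two]
    _ ≤ 3 / 2 * (2 * |t| ^ 3) + |t| ^ 3 / 2 := by
        gcongr
        exact abs_log_one_add_sub_quadratic_le ht
    _ ≤ 4 * |t| ^ 3 := by linarith [pow_nonneg (abs_nonneg t) 3]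

/-- The second-order expansion of `stirlingLog (a + d)` in `d`. Of the derivatives of
`stirlingLog` only the leading parts `log a` and `1 / a` are kept: the contribution of
`log x / 2` to them is absorbed in `stirlingTaylorError`. -/
noncomputable def stirlingTaylor (a d : ℝ) : ℝ :=
  stirlingLog a + d * log a + d ^ 2 / (2 * a)

/-- The error scale of `stirlingTaylor` for arguments of size at least `L` and deviations of size
at most `D`: cubic Taylor remainder, neglected linear term and Stirling error, respectively. -/
noncomputable def stirlingTaylorError (D L : ℝ) : ℝ :=
  4 * (D ^ 3 / L ^ 2) + D / L + 1 / L

theorem stirlingTaylorError_pos {D L : ℝ} (hD : 0 ≤ D) (hL : 0 < L) :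
    0 < stirlingTaylorError D L := by
  unfold stirlingTaylorError
  positivity

theorem stirlingTaylorError_le_of_le {D D' L L' : ℝ} (hD : 0 ≤ D) (hDD' : D ≤ D')
    (hL : 0 < L) (hLL' : L ≤ L') : stirlingTaylorError D L' ≤ stirlingTaylorError D' L := by
  have hD' : 0 ≤ D' := hD.trans hDD'
  unfold stirlingTaylorError
  gcongr

section Factorial

variable {n : ℕ} {a d : ℝ}

theorem abs_log_add_sub_log_le (ha : 0 < a) (hd : |d| ≤ a / 2) :
    |log (a + d) - log a| ≤ 2 * (|d| / a) := by
  have ht : |d / a| = |d| / a := by rw [abs_div, abs_of_pos ha]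
  have ht' : |d / a| ≤ 1 / 2 := by
    rw [ht, div_le_iff₀ ha]
    linarith
  have hadd : 0 < a + d := by linarith [(abs_le.1 hd).1]
  rw [← log_div hadd.ne' ha.ne', add_div, div_self ha.ne', ← ht]
  exact abs_log_one_add_le ht'

theorem abs_stirlingLog_add_sub_stirlingTaylor_le (ha : 0 < a) (hd : |d| ≤ a / 2) :
    |stirlingLog (a + d) - stirlingTaylor a d| ≤ 4 * (|d| ^ 3 / a ^ 2) + |d| / a := by
  obtain ⟨t, rfl⟩ : ∃ t, d = a * t := ⟨d / a, by field_simp⟩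
  have habs : |a * t| = a * |t| := by rw [abs_mul, abs_of_pos ha]
  have ht : |t| ≤ 1 / 2 := by
    rw [habs] at hd
    nlinarith
  have h1t : 0 < 1 + t := by linarith [(abs_le.1 ht).1]
  have hlog : log (a + a * t) = log a + log (1 + t) := by
    rw [← log_mul ha.ne' h1t.ne', mul_add, mul_one]
  have hremainder : stirlingLog (a + a * t) - stirlingTaylor a (a * t) =
      a * ((1 + t) * log (1 + t) - (t + t ^ 2 / 2)) + log (1 + t) / 2 := by
    unfold stirlingTaylor stirlingLog
    rw [hlog]
    field_simp
    ring
  calc |stirlingLog (a + a * t) - stirlingTaylor a (a * t)|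
      ≤ a * |(1 + t) * log (1 + t) - (t + t ^ 2 / 2)| + |log (1 + t)| / 2 := by
        rw [hremainder]
        refine (abs_add_le _ _).trans_eq ?_
        rw [abs_mul, abs_of_pos ha, abs_div, abs_two]
    _ ≤ a * (4 * |t| ^ 3) + 2 * |t| / 2 := by
        gcongr
        · exact abs_one_add_mul_log_one_add_sub_quadratic_le ht
        · exact abs_log_one_add_le ht
    _ = 4 * (|a * t| ^ 3 / a ^ 2) + |a * t| / a := by
        rw [habs]
        field_simp

theorem abs_log_factorial_sub_stirlingTaylor_le (ha : 0 < a) (hd : |d| ≤ a / 2)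
    (hn : (n : ℝ) = a + d) :
    |log (n ! : ℝ) - stirlingTaylor a d| ≤ stirlingTaylorError |d| a := by
  have hn_ge : a / 2 ≤ n := by linarith [(abs_le.1 hd).1]
  have hn_ne : n ≠ 0 := by
    rintro rfl
    rw [Nat.cast_zero] at hn_ge
    linarith
  have hstirling : |log (n ! : ℝ) - stirlingLog (a + d)| ≤ 1 / a := by
    rw [← hn]
    refine (abs_log_factorial_sub_stirlingLog_le hn_ne).trans ?_
    exact one_div_le_one_div_of_le ha (by linarith)
  rw [stirlingTaylorError]
  linarith [abs_sub_le (log (n ! : ℝ)) (stirlingLog (a + d)) (stirlingTaylor a d),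
    abs_stirlingLog_add_sub_stirlingTaylor_le ha hd]

/-- The expansion of `log (Nat.multichoose k n)` for `n = a + d` and `k = b`, obtained by applying
`stirlingTaylor` to the factorials in `(k + n - 1)! / (n! (k - 1)!)`. -/
noncomputable def multichooseTaylor (a b d : ℝ) : ℝ :=
  (a + b) * log (a + b) - a * log a - b * log b + d * (log (a + b) - log a)
    - d ^ 2 / 2 * (1 / a - 1 / (a + b)) + (log b - log a - log (a + b) - log (2 * π)) / 2

theorem multichooseTaylor_eq_stirlingTaylor (a b d : ℝ) :
    multichooseTaylor a b d = stirlingTaylor (a + b) d - log (a + b) - stirlingTaylor a d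
      - (stirlingTaylor b 0 - log b) := by
  simp only [multichooseTaylor, stirlingTaylor, stirlingLog, div_mul_eq_div_div]
  ring

theorem cast_multichoose_eq_factorial_div {k : ℕ} (hk : k ≠ 0) (n : ℕ) :
    (k.multichoose n : ℝ) = (k + n - 1)! / (n ! * (k - 1)!) := by
  rw [Nat.multichoose_eq, show k + n - 1 = n + (k - 1) by omega, Nat.cast_add_choose]

theorem log_factorial_pred {n : ℕ} (hn : n ≠ 0) :
    log ((n - 1)! : ℝ) = log (n ! : ℝ) - log n := by
  rw [← Nat.mul_factorial_pred hn, Nat.cast_mul, log_mul (Nat.cast_ne_zero.2 hn) (by positivity)]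
  ring

theorem log_multichoose {k : ℕ} (hk : k ≠ 0) (n : ℕ) :
    log (k.multichoose n : ℝ) = log ((k + n)! : ℝ) - log (k + n : ℝ) - log (n ! : ℝ)
      - (log (k ! : ℝ) - log k) := by
  rw [cast_multichoose_eq_factorial_div hk, log_div (by positivity) (by positivity),
    log_mul (by positivity) (by positivity), log_factorial_pred hk, log_factorial_pred (by omega)]
  push_cast
  ring

theorem abs_log_multichoose_sub_multichooseTaylor_le {k : ℕ} {D L : ℝ} (hL : 0 < L) (hLa : L ≤ a)
    (hLk : L ≤ k) (hn : (n : ℝ) = a + d) (hdD : |d| ≤ D) (hDL : D ≤ L / 2) :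
    |log (k.multichoose n : ℝ) - multichooseTaylor a k d| ≤ 5 * stirlingTaylorError D L := by
  have hk : k ≠ 0 := by
    rintro rfl
    rw [Nat.cast_zero] at hLk
    linarith
  have hfactorial {m : ℕ} {c e : ℝ} (hLc : L ≤ c) (heD : |e| ≤ D) (hm : (m : ℝ) = c + e) :
      |log (m ! : ℝ) - stirlingTaylor c e| ≤ stirlingTaylorError D L :=
    (abs_log_factorial_sub_stirlingTaylor_le (hL.trans_le hLc) (by linarith) hm).trans
      (stirlingTaylorError_le_of_le (abs_nonneg e) heD hL hLc)
  have hD : 0 ≤ D := (abs_nonneg d).trans hdD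
  have hkn : (k + n : ℝ) = a + k + d := by linarith
  have hlog : |log (k + n : ℝ) - log (a + k)| ≤ 2 * stirlingTaylorError D L := by
    rw [hkn]
    refine (abs_log_add_sub_log_le (by linarith) (by linarith)).trans ?_
    have hratio : |d| / (a + k) ≤ D / L := by
      gcongr
      linarith
    have hrest : 0 ≤ 4 * (D ^ 3 / L ^ 2) + 1 / L := by positivity
    rw [stirlingTaylorError]
    linarith
  have hsum := hfactorial (m := k + n) (c := a + k) (by linarith) hdD (by rw [Nat.cast_add, hkn])
  have hcount := hfactorial hLa hdD hn
  have hmodes := hfactorial hLk (abs_zero.trans_le hD) (add_zero (k : ℝ)).symm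
  rw [log_multichoose hk, multichooseTaylor_eq_stirlingTaylor]
  rw [abs_le] at hlog hsum hcount hmodes ⊢
  constructor <;> linarith

end Factorial

section Modes

variable {ι : Type*} [Fintype ι]

theorem abs_sum_log_multichoose_sub_multichooseTaylor_le {N M : ℕ} {K n : ι → ℕ} {q : ι → ℝ}
    {D L : ℝ} (hq : ∀ i, 0 ≤ q i) (hqsum : ∑ i, q i = 1) (hK : ∀ i, (K i : ℝ) = M * q i)
    (hD : ∀ i, |(n i : ℝ) - N * q i| ≤ D) (hL : 0 < L) (hLN : ∀ i, L ≤ N * q i)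
    (hLM : ∀ i, L ≤ M * q i) (hDL : D ≤ L / 2) :
    |(∑ i, log ((K i).multichoose (n i) : ℝ) - log (M.multichoose N : ℝ))
      - (∑ i, multichooseTaylor (N * q i) (M * q i) (n i - N * q i) - multichooseTaylor N M 0)|
      ≤ 5 * (Fintype.card ι + 1) * stirlingTaylorError D L := by
  obtain ⟨j, -⟩ : (univ : Finset ι).Nonempty :=
    nonempty_of_sum_ne_zero (hqsum.trans_ne one_ne_zero)
  have hq_le : q j ≤ 1 := hqsum ▸ single_le_sum (fun i _ ↦ hq i) (mem_univ j)
  have htotal : |log (M.multichoose N : ℝ) - multichooseTaylor N M 0| ≤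
      5 * stirlingTaylorError D L :=
    abs_log_multichoose_sub_multichooseTaylor_le hL
      ((hLN j).trans (mul_le_of_le_one_right N.cast_nonneg hq_le))
      ((hLM j).trans (mul_le_of_le_one_right M.cast_nonneg hq_le)) (add_zero (N : ℝ)).symm
      (abs_zero.trans_le ((abs_nonneg _).trans (hD j))) hDL
  have hmode (i : ι) : dist (log ((K i).multichoose (n i) : ℝ))
      (multichooseTaylor (N * q i) (M * q i) (n i - N * q i)) ≤ 5 * stirlingTaylorError D L := by
    rw [← hK i]
    exact abs_log_multichoose_sub_multichooseTaylor_le hL (hLN i) ((hLM i).trans_eq (hK i).symm)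
      (by ring) (hD i) hDL
  have hmodes := dist_sum_sum_le_of_le univ fun i _ ↦ hmode i
  rw [dist_eq, sum_const, card_univ, nsmul_eq_mul] at hmodes
  rw [abs_le] at hmodes htotal ⊢
  constructor <;> linarith

theorem multichooseTaylor_mul_right {N M x : ℝ} (hN : 0 < N) (hM : 0 < M) (hx : 0 < x) (d : ℝ) :
    multichooseTaylor (N * x) (M * x) d =
      x * ((N + M) * log (N + M) - N * log N - M * log M) + d * (log (N + M) - log N)
        - d ^ 2 / (2 * (1 + N / M) * x * N) - log x / 2
        + (log M - log N - log (N + M) - log (2 * π)) / 2 := by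
  have hvariance : d ^ 2 / 2 * (1 / (N * x) - 1 / ((N + M) * x)) =
      d ^ 2 / (2 * (1 + N / M) * x * N) := by
    field_simp
    ring
  rw [multichooseTaylor, ← add_mul, hvariance, log_mul (by positivity) hx.ne',
    log_mul hN.ne' hx.ne', log_mul hM.ne' hx.ne']
  ring

theorem sum_multichooseTaylor_sub_multichooseTaylor {N M : ℝ} {q d : ι → ℝ} (hN : 0 < N)
    (hM : 0 < M) (hq : ∀ i, 0 < q i) (hqsum : ∑ i, q i = 1) (hdsum : ∑ i, d i = 0) :
    ∑ i, multichooseTaylor (N * q i) (M * q i) (d i) - multichooseTaylor N M 0 =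
      -∑ i, d i ^ 2 / (2 * (1 + N / M) * q i * N)
        - (((Fintype.card ι : ℝ) - 1) / 2 * log (2 * π * (1 + N / M) * N)
          + ∑ i, log (q i) / 2) := by
  have hlog : log (2 * π * (1 + N / M) * N) = log (2 * π) + log (N + M) - log M + log N := by
    rw [show 1 + N / M = (N + M) / M by field_simp; ring, log_mul (by positivity) hN.ne',
      log_mul (by positivity) (by positivity), log_div (by positivity) hM.ne']
    ring
  simp only [fun i ↦ multichooseTaylor_mul_right hN hM (hq i) (d i), sum_add_distrib,
    sum_sub_distrib, ← sum_mul, hqsum, hdsum, sum_const, card_univ, nsmul_eq_mul]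
  rw [hlog, multichooseTaylor]
  ring

end Modes

section LogProbabilities

variable {r : ℕ}

theorem PB_eq_prod_multichoose_div {M : ℕ} {K : Fin r → ℕ} (hM : M ≠ 0) (hK : ∀ i, K i ≠ 0)
    (n : Fin r → ℕ) :
    PB M n K = (∏ i, ((K i).multichoose (n i) : ℝ)) / M.multichoose (∑ i, n i) := by
  simp only [PB, cast_multichoose_eq_factorial_div hM,
    fun i ↦ cast_multichoose_eq_factorial_div (hK i) (n i), prod_div_distrib, prod_mul_distrib]
  field_simp

theorem PB_pos (M : ℕ) (n K : Fin r → ℕ) : 0 < PB M n K := by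
  unfold PB
  positivity

theorem log_PB {M : ℕ} {K : Fin r → ℕ} (hM : M ≠ 0) (hK : ∀ i, K i ≠ 0) (n : Fin r → ℕ) :
    log (PB M n K) =
      ∑ i, log ((K i).multichoose (n i) : ℝ) - log (M.multichoose (∑ i, n i) : ℝ) := by
  have hpos {k : ℕ} (hk : k ≠ 0) (m : ℕ) : (k.multichoose m : ℝ) ≠ 0 := by
    rw [cast_multichoose_eq_factorial_div hk]
    positivity
  rw [PB_eq_prod_multichoose_div hM hK,
    log_div (prod_ne_zero_iff.2 fun i _ ↦ hpos (hK i) _) (hpos hM _),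
    log_prod fun i _ ↦ hpos (hK i) _]

variable {N : ℕ} {q : Fin r → ℚ} {α : ℚ}

theorem GaussB_pos (hN : 0 < N) (hq : ∀ i, 0 < q i) (hα : 0 < α) (n : Fin r → ℕ) :
    0 < GaussB N n q α := by
  have hprod : 0 < ∏ i, √(q i : ℝ) := prod_pos fun i _ ↦ sqrt_pos.2 (Rat.cast_pos.2 (hq i))
  unfold GaussB
  positivity

theorem log_GaussB (hN : 0 < N) (hq : ∀ i, 0 < q i) (hα : 0 < α) (n : Fin r → ℕ) :
    log (GaussB N n q α) =
      -∑ i, ((n i : ℝ) - N * q i) ^ 2 / (2 * (1 + α) * q i * N)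
        - (((r : ℝ) - 1) / 2 * log (2 * π * (1 + α) * N) + ∑ i, log (q i : ℝ) / 2) := by
  have hq' (i : Fin r) : (0 : ℝ) < q i := Rat.cast_pos.2 (hq i)
  have hsqrt (i : Fin r) : √(q i : ℝ) ≠ 0 := (sqrt_pos.2 (hq' i)).ne'
  have hbase : 0 < 2 * π * (1 + (α : ℝ)) * N := by positivity
  have hexponent : -(N : ℝ) * ∑ i, ((n i : ℝ) / N - q i) ^ 2 / (2 * (1 + α) * q i) =
      -∑ i, ((n i : ℝ) - N * q i) ^ 2 / (2 * (1 + α) * q i * N) := by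
    rw [neg_mul, mul_sum]
    congr! 2 with i
    have := (hq' i).ne'
    field_simp
  rw [GaussB, hexponent, log_div (exp_ne_zero _)
      (mul_ne_zero (rpow_pos_of_pos hbase _).ne' (prod_ne_zero_iff.2 fun i _ ↦ hsqrt i)),
    log_exp, log_mul (rpow_pos_of_pos hbase _).ne' (prod_ne_zero_iff.2 fun i _ ↦ hsqrt i),
    log_rpow hbase, log_prod fun i _ ↦ hsqrt i]
  simp only [fun i ↦ log_sqrt (hq' i).le]

theorem abs_log_PB_sub_log_GaussB_le {M : ℕ} {K n : Fin r → ℕ} {D L : ℝ} (hq : ∀ i, 0 < q i)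
    (hqsum : ∑ i, q i = 1) (hα : 0 < α) (hM : α * M = N) (hK : ∀ i, (K i : ℚ) = q i * M)
    (hn : ∑ i, n i = N) (hD : ∀ i, |(n i : ℝ) - N * q i| ≤ D) (hL : 0 < L)
    (hLN : ∀ i, L ≤ N * q i) (hLM : ∀ i, L ≤ M * q i) (hDL : D ≤ L / 2) :
    |log (PB M n K) - log (GaussB N n q α)| ≤ 5 * (r + 1) * stirlingTaylorError D L := by
  have hq' (i : Fin r) : (0 : ℝ) < q i := Rat.cast_pos.2 (hq i)
  have hqsum' : ∑ i, (q i : ℝ) = 1 := by exact_mod_cast hqsum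
  obtain ⟨j, -⟩ : (univ : Finset (Fin r)).Nonempty :=
    nonempty_of_sum_ne_zero (hqsum.trans_ne one_ne_zero)
  have hN : (0 : ℝ) < N := pos_of_mul_pos_left (hL.trans_le (hLN j)) (hq' j).le
  have hM_pos : (0 : ℝ) < M := pos_of_mul_pos_left (hL.trans_le (hLM j)) (hq' j).le
  have hK' (i : Fin r) : (K i : ℝ) = M * q i := by
    rw [mul_comm]
    exact_mod_cast hK i
  have hK_ne (i : Fin r) : K i ≠ 0 :=
    Nat.cast_ne_zero.1 ((hK' i).trans_ne (mul_pos hM_pos (hq' i)).ne')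
  have hα' : (α : ℝ) = N / M := by
    rw [eq_div_iff hM_pos.ne']
    exact_mod_cast hM
  have hd_sum : ∑ i, ((n i : ℝ) - N * q i) = 0 := by
    rw [sum_sub_distrib, ← mul_sum, hqsum', ← Nat.cast_sum, hn, mul_one, sub_self]
  have hGauss := sum_multichooseTaylor_sub_multichooseTaylor hN hM_pos hq' hqsum' hd_sum
  rw [Fintype.card_fin, ← hα', ← log_GaussB (Nat.cast_pos.1 hN) hq hα n] at hGauss
  rw [log_PB (Nat.cast_ne_zero.1 hM_pos.ne') hK_ne, hn, ← hGauss]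
  simpa only [Fintype.card_fin] using abs_sum_log_multichoose_sub_multichooseTaylor_le
    (fun i ↦ (hq' i).le) hqsum' hK' hD hL hLN hLM hDL

end LogProbabilities

theorem abs_sub_le_of_abs_log_sub_log_le {x y δ : ℝ} (hx : 0 < x) (hy : 0 < y)
    (hxy : |log x - log y| ≤ δ) (hδ : δ ≤ 1) : |x - y| ≤ 2 * δ * y := by
  have hratio : x - y = (exp (log x - log y) - 1) * y := by
    rw [exp_sub, exp_log hx, exp_log hy]
    field_simp
  rw [hratio, abs_mul, abs_of_pos hy]
  gcongr
  exact (abs_exp_sub_one_le (hxy.trans hδ)).trans (by gcongr)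

theorem eventually_const_mul_rpow_le {s t c : ℝ} (hst : s < t) (A : ℝ) (hc : 0 < c) :
    ∀ᶠ x : ℝ in atTop, A * x ^ s ≤ c * x ^ t := by
  have hlim : Tendsto (fun x : ℝ ↦ A * x ^ (-(t - s))) atTop (nhds 0) := by
    simpa using (tendsto_rpow_neg_atTop (sub_pos.2 hst)).const_mul A
  filter_upwards [hlim.eventually_le_const hc, eventually_gt_atTop 0] with x hle hx
  calc A * x ^ s = A * x ^ (-(t - s)) * x ^ t := by
        rw [mul_assoc, ← rpow_add hx]
        ring_nf
    _ ≤ c * x ^ t := by gcongr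

theorem stirlingTaylorError_mul_rpow_le {A c ε x : ℝ} (hA : 0 ≤ A) (hc : 0 < c) (hε : ε ≤ 1 / 6)
    (hx : 1 ≤ x) :
    stirlingTaylorError (A * x ^ ((2 : ℝ) / 3 - ε)) (c * x) ≤
      stirlingTaylorError A c * x ^ (-(3 * ε)) := by
  have hx0 : 0 < x := one_pos.trans_le hx
  have hcubic : (x ^ ((2 : ℝ) / 3 - ε)) ^ 3 / x ^ 2 = x ^ (-(3 * ε)) := by
    rw [← rpow_mul_natCast hx0.le, ← rpow_sub_natCast hx0.ne']
    congr 1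
    push_cast
    ring
  have hlinear : x ^ ((2 : ℝ) / 3 - ε) / x ≤ x ^ (-(3 * ε)) := by
    rw [← rpow_sub_one hx0.ne']
    exact rpow_le_rpow_of_exponent_le hx (by linarith)
  have hconst : 1 / x ≤ x ^ (-(3 * ε)) := by
    rw [one_div, ← rpow_neg_one]
    exact rpow_le_rpow_of_exponent_le hx (by linarith)
  calc stirlingTaylorError (A * x ^ ((2 : ℝ) / 3 - ε)) (c * x)
      = 4 * (A ^ 3 / c ^ 2) * ((x ^ ((2 : ℝ) / 3 - ε)) ^ 3 / x ^ 2)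
          + A / c * (x ^ ((2 : ℝ) / 3 - ε) / x) + 1 / c * (1 / x) := by
        rw [stirlingTaylorError]
        field_simp
    _ ≤ 4 * (A ^ 3 / c ^ 2) * x ^ (-(3 * ε)) + A / c * x ^ (-(3 * ε))
          + 1 / c * x ^ (-(3 * ε)) := by
        rw [hcubic]
        gcongr
    _ = stirlingTaylorError A c * x ^ (-(3 * ε)) := by
        rw [stirlingTaylorError]
        ring

theorem exists_pos_forall_mul_le_mean {ι : Type*} [Finite ι] {q : ι → ℝ} {α : ℝ}
    (hq : ∀ i, 0 < q i) (hα : 0 < α) :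
    ∃ c > 0, ∀ M ≥ 0, ∀ i, c * (α * M) ≤ α * M * q i ∧ c * (α * M) ≤ M * q i := by
  cases isEmpty_or_nonempty ι
  · exact ⟨1, one_pos, fun _ _ ↦ isEmptyElim⟩
  obtain ⟨j, hj⟩ := Finite.exists_min q
  refine ⟨min (q j) (q j / α), lt_min (hq j) (div_pos (hq j) hα), fun M hM i ↦ ⟨?_, ?_⟩⟩
  · rw [mul_comm]
    gcongr
    exact (min_le_left _ _).trans (hj i)
  · rw [← mul_assoc, mul_comm M]
    gcongr
    exact ((le_div_iff₀ hα).1 (min_le_right _ _)).trans (hj i)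

theorem eventually_central_region_bounds {c ε : ℝ} (hc : 0 < c) (hε : 0 < ε) (A B : ℝ) :
    ∀ᶠ x : ℝ in atTop,
      1 ≤ x ∧ A * x ^ ((2 : ℝ) / 3 - ε) ≤ c * x / 2 ∧ B * x ^ (-(3 * ε)) ≤ 1 := by
  filter_upwards [eventually_ge_atTop 1,
    eventually_const_mul_rpow_le (t := 1) (by linarith : (2 : ℝ) / 3 - ε < 1) A (half_pos hc),
    eventually_const_mul_rpow_le (t := 0) (by linarith : -(3 * ε) < 0) B one_pos]
    with x hx hdev herror
  rw [rpow_one] at hdev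
  rw [rpow_zero, mul_one] at herror
  exact ⟨hx, by linarith, herror⟩

/-- Quantum de Moivre–Laplace theorem for bosons: at fixed density `α = N/M`,
for counts in the central region `|nᵢ - N qᵢ| ≤ A N^(2/3-ε)`, the average bosonic
counting probability is the Gaussian up to a relative error `O(N^(-3ε))`. -/
theorem deMoivreLaplace_bosons
    (r : ℕ) (hr : 2 ≤ r) (q : Fin r → ℚ)
    (hq0 : ∀ i, 0 < q i) (hq1 : ∀ i, q i < 1) (hqsum : ∑ i, q i = 1)
    (α : ℚ) (hα : 0 < α)
    (A ε : ℝ) (hA : 0 < A) (hε0 : 0 < ε) (hε1 : ε < 1 / 6) :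
    ∃ C > 0, ∃ N₀ : ℕ, ∀ N : ℕ, N₀ ≤ N → ∀ M : ℕ, α * M = N →
      ∀ K : Fin r → ℕ, (∀ i, (K i : ℚ) = q i * M) →
      ∀ n : Fin r → ℕ, ∑ i, n i = N →
      (∀ i, |(n i : ℝ) - (N : ℝ) * (q i : ℝ)| ≤ A * (N : ℝ) ^ ((2 : ℝ) / 3 - ε)) →
      |PB M n K - GaussB N n q α| ≤ C * (N : ℝ) ^ (-(3 * ε)) * GaussB N n q α := by
  obtain ⟨c, hc, hcentre⟩ := exists_pos_forall_mul_le_mean (q := fun i ↦ (q i : ℝ))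
    (fun i ↦ Rat.cast_pos.2 (hq0 i)) (Rat.cast_pos.2 hα : (0 : ℝ) < α)
  let B : ℝ := 5 * (r + 1) * stirlingTaylorError A c
  have hB : 0 < B := mul_pos (by positivity) (stirlingTaylorError_pos hA.le hc)
  obtain ⟨N₀, hN₀⟩ := eventually_atTop.1
    (tendsto_natCast_atTop_atTop.eventually (eventually_central_region_bounds hc hε0 A B))
  refine ⟨2 * B, by positivity, N₀, fun N hN M hM K hK n hn hdev ↦ ?_⟩
  obtain ⟨hN_one, hdev_le, herror_le⟩ := hN₀ N hN
  have hcN := hcentre M M.cast_nonneg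
  rw [show (α : ℝ) * M = N by exact_mod_cast hM] at hcN
  have hN_pos : (0 : ℝ) < N := one_pos.trans_le hN_one
  have hlog : |log (PB M n K) - log (GaussB N n q α)| ≤ B * (N : ℝ) ^ (-(3 * ε)) :=
    calc |log (PB M n K) - log (GaussB N n q α)|
        ≤ 5 * (r + 1) * stirlingTaylorError _ (c * N) :=
          abs_log_PB_sub_log_GaussB_le hq0 hqsum hα hM hK hn hdev (by positivity)
            (fun i ↦ (hcN i).1) (fun i ↦ (hcN i).2) hdev_le
      _ ≤ B * (N : ℝ) ^ (-(3 * ε)) := by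
          rw [mul_assoc (5 * (r + 1 : ℝ))]
          gcongr
          exact stirlingTaylorError_mul_rpow_le hA.le hc hε1.le hN_one
  rw [mul_assoc 2 B]
  exact abs_sub_le_of_abs_log_sub_log_le (PB_pos M n K)
    (GaussB_pos (Nat.cast_pos.1 hN_pos) hq0 hα n) hlog herror_le
end

section
/- Fix an integer r ≥ 2, rationals q_1,…,q_r ∈ (0,1) with q_1+⋯+q_r = 1, a rational α > 0, a real A > 0 and a real ε with 0 < ε < 1/6. Then there exist C > 0 and N₀ ∈ ℕ such that for every N ≥ N₀ and M ∈ ℕ with α·M = N, every K : Fin r → ℕ with K_i = q_i·M for every i, and every n : Fin r → ℕ with ∑_i n_i = N such that |n_i − N·q_i| > A·N^{2/3−ε} for at least one i, one has P^B(n|K) ≤ C·√N·exp(−A²·N^{1/3−2ε}/(1+α)). -/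
open Finset

/-!
Give each of the `M` modes an independent Bose–Einstein (geometric) occupation of mean `α`. The
occupation of a group of `K` modes is then negative binomial, and conditioning on the total being
`N` produces exactly `P^B`, so `P^B` is a product of negative binomial weights divided by the weight
of the total. When `α M = N` the total sits at its mean, and Stirling's formula bounds its weight
below by a constant over `√N`. Each factor of the numerator is bounded by exponential tilting;
tilting group `i` by `u` and recentring so that the tilts have mean zero leaves only the deviation
`nᵢ - α Kᵢ` in the exponent, at a quadratic cost of at most `(1 + α) N u² / 4`. The choice
`u = ± 2 δ / ((1 + α) N)` gives `exp (-δ² / ((1 + α) N))`.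
-/

open Real

theorem factorial_le_stirling {n : ℕ} (hn : n ≠ 0) :
    (n.factorial : ℝ) ≤ exp 1 * √n * (n / exp 1) ^ n := by
  obtain ⟨m, rfl⟩ := Nat.exists_eq_succ_of_ne_zero hn
  have h : Stirling.stirlingSeq (m + 1) ≤ exp 1 / √2 := by
    simpa using Stirling.stirlingSeq'_antitone m.zero_le
  rw [Stirling.stirlingSeq, div_le_iff₀ (by positivity), sqrt_mul zero_le_two] at h
  calc ((m + 1).factorial : ℝ)
      ≤ exp 1 / √2 * (√2 * √(m + 1 : ℕ) * ((m + 1 : ℕ) / exp 1) ^ (m + 1)) := h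
    _ = exp 1 * √(m + 1 : ℕ) * ((m + 1 : ℕ) / exp 1) ^ (m + 1) := by field_simp

theorem le_add_choose_stirling {m n : ℕ} (hm : m ≠ 0) (hn : n ≠ 0) :
    √(2 * π) / exp 1 ^ 2 * √((m + n) / (m * n)) * ((m + n) ^ (m + n) / (m ^ m * n ^ n)) ≤
      ((m + n).choose m : ℝ) := by
  have hm' : (0 : ℝ) < m := by exact_mod_cast hm.bot_lt
  calc √(2 * π) / exp 1 ^ 2 * √((m + n) / (m * n)) * ((m + n) ^ (m + n) / (m ^ m * n ^ n))
      = √(2 * π * (m + n : ℕ)) * ((m + n : ℕ) / exp 1) ^ (m + n) /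
          ((exp 1 * √m * (m / exp 1) ^ m) * (exp 1 * √n * (n / exp 1) ^ n)) := by
        rw [sqrt_div (by positivity), sqrt_mul hm'.le, sqrt_mul (by positivity : 0 ≤ 2 * π)]
        simp only [div_pow, pow_add, Nat.cast_add]
        field_simp
    _ ≤ (m + n).factorial / (m.factorial * n.factorial) := by
        gcongr
        · exact Stirling.le_factorial_stirling (m + n)
        · exact factorial_le_stirling hm
        · exact factorial_le_stirling hn
    _ = (m + n).choose m := (Nat.cast_add_choose ℝ).symm

theorem cast_multichoose {K : ℕ} (hK : 0 < K) (n : ℕ) :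
    (K.multichoose n : ℝ) = (K + n - 1).factorial / ((K - 1).factorial * n.factorial) := by
  obtain ⟨k, rfl⟩ := Nat.exists_eq_succ_of_ne_zero hK.ne'
  rw [Nat.multichoose_eq, show k.succ + n - 1 = k + n by lia, ← Nat.choose_symm_add,
    Nat.cast_add_choose, Nat.succ_sub_one]

theorem cast_multichoose_eq_mul_choose {K : ℕ} (hK : 0 < K) (n : ℕ) :
    (K.multichoose n : ℝ) = K / (K + n) * (K + n).choose K := by
  have hadd : ((K + n).factorial : ℝ) = (K + n) * (K + n - 1).factorial := by
    exact_mod_cast (Nat.mul_factorial_pred (by lia : K + n ≠ 0)).symm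
  have hpred : (K.factorial : ℝ) = K * (K - 1).factorial := by
    exact_mod_cast (Nat.mul_factorial_pred hK.ne').symm
  rw [cast_multichoose hK, Nat.cast_add_choose, hadd, hpred]
  field_simp

/-- The probability that `K` independent Bose–Einstein modes, each of mean occupation `α`, hold
`n` particles in total. In terms of the success probability `p` of the underlying geometric
distribution, `α / (1 + α) = 1 - p` and `1 / (1 + α) = p`. -/
noncomputable def negBinomial (α : ℝ) (K n : ℕ) : ℝ :=
  K.multichoose n * (α / (1 + α)) ^ n * (1 / (1 + α)) ^ K

theorem negBinomial_nonneg {α : ℝ} (hα : 0 ≤ α) (K n : ℕ) : 0 ≤ negBinomial α K n := by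
  unfold negBinomial
  positivity

theorem PB_eq_prod_negBinomial_div {α : ℝ} (hα : 0 < α) {r M : ℕ} {n K : Fin r → ℕ}
    (hK : ∀ j, 0 < K j) (hM : ∑ j, K j = M) (hM₀ : 0 < M) :
    PB M n K = (∏ j, negBinomial α (K j) (n j)) / negBinomial α M (∑ j, n j) := by
  have hprod : ∏ j, negBinomial α (K j) (n j) =
      (∏ j, ((K j + n j - 1).factorial : ℝ) / (K j - 1).factorial) /
        (∏ j, ((n j).factorial : ℝ)) *
        ((α / (1 + α)) ^ (∑ j, n j) * (1 / (1 + α)) ^ M) := by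
    simp_rw [negBinomial, fun j ↦ cast_multichoose (hK j) (n j), ← div_div]
    rw [prod_mul_distrib, prod_mul_distrib, prod_pow_eq_pow_sum, prod_pow_eq_pow_sum, hM,
      prod_div_distrib, mul_assoc]
  rw [hprod, negBinomial, cast_multichoose hM₀, PB]
  generalize ∏ j, ((K j + n j - 1).factorial : ℝ) / (K j - 1).factorial = P
  field_simp

theorem le_negBinomial_of_mul_eq {α : ℝ} (hα : 0 < α) {M N : ℕ} (hM : 0 < M) (hN : α * M = N) :
    √(2 * π) / (exp 1 ^ 2 * √((1 + α) * N)) ≤ negBinomial α M N := by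
  have hM' : (0 : ℝ) < M := by exact_mod_cast hM
  have hN' : (0 : ℝ) < N := hN ▸ mul_pos hα hM'
  have hx : α / (1 + α) = N / (M + N) := by rw [← hN]; field_simp
  have hz : 1 / (1 + α) = M / (M + N) := by rw [← hN]; field_simp
  have hpow : (M + N : ℝ) ^ (M + N) / (M ^ M * N ^ N) *
      (α / (1 + α)) ^ N * (1 / (1 + α)) ^ M = 1 := by
    rw [hx, hz, div_pow, div_pow, pow_add]
    field_simp
  have hsqrt : M / (M + N) * √((M + N) / (M * N)) = 1 / √((1 + α) * N) := by
    have hratio : (M + N) / (M * N) = (1 + α) / N := by rw [← hN]; field_simp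
    rw [hratio, ← hz, sqrt_div (by positivity), sqrt_mul (by positivity)]
    field_simp
    exact sq_sqrt (by positivity)
  calc √(2 * π) / (exp 1 ^ 2 * √((1 + α) * N))
      = √(2 * π) / exp 1 ^ 2 * (1 / √((1 + α) * N)) := by ring
    _ = √(2 * π) / exp 1 ^ 2 * (M / (M + N) * √((M + N) / (M * N))) *
          ((M + N) ^ (M + N) / (M ^ M * N ^ N) * (α / (1 + α)) ^ N * (1 / (1 + α)) ^ M) := by
        rw [hpow, hsqrt, mul_one]
    _ = M / (M + N) * (√(2 * π) / exp 1 ^ 2 * √((M + N) / (M * N)) *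
          ((M + N) ^ (M + N) / (M ^ M * N ^ N))) * (α / (1 + α)) ^ N * (1 / (1 + α)) ^ M := by
        ring
    _ ≤ M / (M + N) * (M + N).choose M * (α / (1 + α)) ^ N * (1 / (1 + α)) ^ M := by
        gcongr
        exact le_add_choose_stirling hM.ne' (by exact_mod_cast hN'.ne')
    _ = negBinomial α M N := by rw [negBinomial, cast_multichoose_eq_mul_choose hM]

theorem multichoose_mul_pow_le_one {x : ℝ} (hx₀ : 0 ≤ x) (hx₁ : x ≤ 1) (K n : ℕ) :
    K.multichoose n * x ^ n * (1 - x) ^ K ≤ 1 := by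
  have hy₀ : 0 ≤ 1 - x := sub_nonneg.2 hx₁
  induction K generalizing n with
  | zero => cases n <;> simp
  | succ K ihK =>
    induction n with
    | zero => simpa using pow_le_one₀ hy₀ (sub_le_self 1 hx₀)
    | succ n ihn =>
      rw [Nat.multichoose_succ_succ]
      push_cast
      linear_combination (1 - x) * ihK (n + 1) + x * ihn

theorem exp_le_one_add_add_mul_sq {x : ℝ} (hx : |x| ≤ 1) : exp x ≤ 1 + x + 3 / 4 * x ^ 2 := by
  have h := (abs_le.1 (exp_bound hx (n := 3) (by norm_num))).2
  norm_num [sum_range_succ, Nat.factorial] at h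
  have hcube : |x| ^ 3 ≤ x ^ 2 := by
    rw [pow_succ, sq_abs]
    exact mul_le_of_le_one_right (sq_nonneg x) hx
  linarith [sq_nonneg x]

/- Since `log (1 - α * (exp s - 1)) = -α * s - α * (1 + α) * s ^ 2 / 2 + O(s ^ 3)`, doubling the
quadratic coefficient leaves room for the remainder. -/
theorem exp_neg_le_one_sub_mul_exp_sub_one {α s : ℝ} (hα : 0 ≤ α) (hs : (1 + α) * |s| ≤ 1 / 8) :
    exp (-(α * s + α * (1 + α) * s ^ 2)) ≤ 1 - α * (exp s - 1) := by
  have hs_abs : |s| ≤ 1 / 8 := by linarith [mul_nonneg hα (abs_nonneg s)]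
  have hαs : |α * s| ≤ 1 / 8 := by
    rw [abs_mul, abs_of_nonneg hα]; linarith [abs_nonneg s]
  have hfactor : |1 + (1 + α) * s| ≤ 9 / 8 := by
    have hw : |(1 + α) * s| ≤ 1 / 8 := by rwa [abs_mul, abs_of_pos (by positivity)]
    rw [abs_le] at hw ⊢
    constructor <;> linarith
  have hfactor_sq : (1 + (1 + α) * s) ^ 2 ≤ 4 / 3 :=
    (sq_le_sq' (abs_le.1 hfactor).1 (abs_le.1 hfactor).2).trans (by norm_num)
  have hexponent : |-(α * s * (1 + (1 + α) * s))| ≤ 1 := by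
    rw [abs_neg, abs_mul]
    exact (mul_le_mul hαs hfactor (abs_nonneg _) (by norm_num)).trans (by norm_num)
  calc exp (-(α * s + α * (1 + α) * s ^ 2))
      = exp (-(α * s * (1 + (1 + α) * s))) := by ring_nf
    _ ≤ 1 + -(α * s * (1 + (1 + α) * s)) + 3 / 4 * (-(α * s * (1 + (1 + α) * s))) ^ 2 :=
        exp_le_one_add_add_mul_sq hexponent
    _ = 1 - α * s - α * (1 + α) * s ^ 2 + 3 / 4 * (α * s) ^ 2 * (1 + (1 + α) * s) ^ 2 := by ring
    _ ≤ 1 - α * s - α * (1 + α) * s ^ 2 + 3 / 4 * (α * s) ^ 2 * (4 / 3) := by gcongr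
    _ = 1 - α * (1 + s + s ^ 2 - 1) := by ring
    _ ≤ 1 - α * (1 + s + 3 / 4 * s ^ 2 - 1) := by
        linarith [mul_nonneg hα (sq_nonneg s)]
    _ ≤ 1 - α * (exp s - 1) := by
        gcongr
        exact exp_le_one_add_add_mul_sq (hs_abs.trans (by norm_num))

theorem negBinomial_le_exp {α s : ℝ} (hα : 0 < α) (hs : (1 + α) * |s| ≤ 1 / 8) (K n : ℕ) :
    negBinomial α K n ≤ exp (-(s * (n - α * K)) + α * (1 + α) * (K * s ^ 2)) := by
  set x := α / (1 + α) * exp s with hx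
  have hx₀ : 0 < x := by positivity
  have hone_sub : 1 - x = 1 / (1 + α) * (1 - α * (exp s - 1)) := by rw [hx]; field_simp; ring
  have hlocal := exp_neg_le_one_sub_mul_exp_sub_one hα.le hs
  have hx₁ : x ≤ 1 := by
    rw [← sub_nonneg, hone_sub]
    exact mul_nonneg (by positivity) ((exp_pos _).le.trans hlocal)
  have htilt : negBinomial α K n *
      (exp s ^ n * exp (-(α * s + α * (1 + α) * s ^ 2)) ^ K) ≤ 1 :=
    calc negBinomial α K n * (exp s ^ n * exp (-(α * s + α * (1 + α) * s ^ 2)) ^ K)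
        ≤ negBinomial α K n * (exp s ^ n * (1 - α * (exp s - 1)) ^ K) := by
          gcongr
          exact negBinomial_nonneg hα.le K n
      _ = K.multichoose n * x ^ n * (1 - x) ^ K := by
          rw [hone_sub, negBinomial, hx, mul_pow, mul_pow]; ring
      _ ≤ 1 := multichoose_mul_pow_le_one hx₀.le hx₁ K n
  rw [← exp_nat_mul, ← exp_nat_mul, ← exp_add] at htilt
  rw [← le_div_iff₀ (exp_pos _), one_div, ← exp_neg] at htilt
  exact htilt.trans_eq (by congr 1; ring)

theorem sum_indicator_sub_mul {ι R : Type*} [Fintype ι] [DecidableEq ι] [Ring R] {f : ι → R}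
    (hf : ∑ j, f j = 0) (i : ι) (c : R) :
    ∑ j, ((if j = i then 1 else 0) - c) * f j = f i := by
  simp [sub_mul, sum_sub_distrib, ← mul_sum, hf]

theorem sum_mul_sq_indicator_sub_le {ι : Type*} [Fintype ι] [DecidableEq ι] {w : ι → ℝ}
    (hw : 0 < ∑ j, w j) (i : ι) :
    ∑ j, w j * ((if j = i then 1 else 0) - w i / ∑ j, w j) ^ 2 ≤ (∑ j, w j) / 4 := by
  set W := ∑ j, w j
  set p := w i / W
  have hexpand (j : ι) : w j * ((if j = i then 1 else 0) - p) ^ 2 =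
      (if j = i then w j * (1 - 2 * p) else 0) + w j * p ^ 2 := by
    split_ifs <;> ring
  have hwi : w i = p * W := (div_mul_cancel₀ _ hw.ne').symm
  calc ∑ j, w j * ((if j = i then 1 else 0) - p) ^ 2
      = w i * (1 - 2 * p) + W * p ^ 2 := by
        simp_rw [hexpand]
        rw [sum_add_distrib, sum_ite_eq' univ i, if_pos (mem_univ i), ← sum_mul]
    _ = W * (p * (1 - p)) := by rw [hwi]; ring
    _ ≤ W * (1 / 4) := by
        gcongr
        linarith [sq_nonneg (p - 1 / 2)]
    _ = W / 4 := by ring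

theorem prod_negBinomial_le_exp {ι : Type*} [Fintype ι] {α u : ℝ} (hα : 0 < α)
    (hu : (1 + α) * |u| ≤ 1 / 8) {K n : ι → ℕ} (hK : 0 < ∑ j, K j)
    (hn : (∑ j, n j : ℝ) = α * ∑ j, (K j : ℝ)) (i : ι) :
    ∏ j, negBinomial α (K j) (n j) ≤
      exp (-(u * (n i - α * K i)) + α * (1 + α) * ((∑ j, (K j : ℝ)) * u ^ 2 / 4)) := by
  classical
  have hW : 0 < ∑ j, (K j : ℝ) := by exact_mod_cast hK
  set p := K i / ∑ j, (K j : ℝ)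
  have hp₀ : 0 ≤ p := by positivity
  have hp₁ : p ≤ 1 := div_le_one_of_le₀
    (single_le_sum (f := fun j ↦ (K j : ℝ)) (fun j _ ↦ by positivity) (mem_univ i)) hW.le
  set s : ι → ℝ := fun j ↦ ((if j = i then 1 else 0) - p) * u with hs
  have hs_small (j : ι) : (1 + α) * |s j| ≤ 1 / 8 := by
    have hcoef : |(if j = i then (1 : ℝ) else 0) - p| ≤ 1 := by
      rw [abs_le]; split_ifs <;> constructor <;> linarith
    refine le_trans ?_ hu
    rw [hs, abs_mul]
    gcongr
    exact mul_le_of_le_one_left (abs_nonneg u) hcoef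
  have hcentered : ∑ j, ((n j : ℝ) - α * K j) = 0 := by
    rw [sum_sub_distrib, ← mul_sum, hn, sub_self]
  have hlinear : ∑ j, s j * (n j - α * K j) = u * (n i - α * K i) := by
    rw [← sum_indicator_sub_mul hcentered i p, mul_sum]
    exact sum_congr rfl fun j _ ↦ by simp only [hs]; ring
  have hquadratic : ∑ j, K j * s j ^ 2 ≤ (∑ j, (K j : ℝ)) * u ^ 2 / 4 := by
    simp_rw [hs, mul_pow, ← mul_assoc]
    rw [← sum_mul, mul_div_right_comm]
    gcongr
    exact sum_mul_sq_indicator_sub_le hW i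
  calc ∏ j, negBinomial α (K j) (n j)
      ≤ ∏ j, exp (-(s j * (n j - α * K j)) + α * (1 + α) * (K j * s j ^ 2)) :=
        prod_le_prod (fun j _ ↦ negBinomial_nonneg hα.le _ _)
          fun j _ ↦ negBinomial_le_exp hα (hs_small j) _ _
    _ = exp (-(u * (n i - α * K i)) + α * (1 + α) * ∑ j, K j * s j ^ 2) := by
        rw [← exp_sum, sum_add_distrib, sum_neg_distrib, hlinear, mul_sum]
    _ ≤ _ := by gcongr

theorem prod_negBinomial_le_exp_neg_sq {ι : Type*} [Fintype ι] {α δ : ℝ} (hα : 0 < α)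
    {K n : ι → ℕ} {N : ℝ} (hK : 0 < ∑ j, K j) (hαK : α * ∑ j, (K j : ℝ) = N)
    (hn : (∑ j, n j : ℝ) = N) (hδ : 0 ≤ δ) (hδN : δ ≤ 1 / 16 * N) {i : ι}
    (hi : δ ≤ |n i - α * K i|) :
    ∏ j, negBinomial α (K j) (n j) ≤ exp (-δ ^ 2 / ((1 + α) * N)) := by
  have hN : 0 < N := hαK ▸ mul_pos hα (by exact_mod_cast hK)
  set D : ℝ := n i - α * K i
  set v := 2 * δ / ((1 + α) * N) with hv
  have hv₀ : 0 ≤ v := by positivity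
  have hv_small : (1 + α) * v ≤ 1 / 8 := by
    rw [hv]; field_simp; linarith
  obtain ⟨u, hu, huD⟩ : ∃ u : ℝ, |u| = v ∧ u * D = v * |D| := by
    rcases abs_choice D with h | h
    · exact ⟨v, abs_of_nonneg hv₀, by rw [h]⟩
    · exact ⟨-v, by rw [abs_neg, abs_of_nonneg hv₀], by rw [h]; ring⟩
  refine (prod_negBinomial_le_exp hα (hu ▸ hv_small) hK (hn.trans hαK.symm) i).trans ?_
  gcongr
  calc -(u * D) + α * (1 + α) * ((∑ j, (K j : ℝ)) * u ^ 2 / 4)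
      = -(v * |D|) + (1 + α) * N * v ^ 2 / 4 := by
        rw [huD, ← sq_abs u, hu, ← hαK]; ring
    _ ≤ -(v * δ) + (1 + α) * N * v ^ 2 / 4 := by gcongr
    _ = -δ ^ 2 / ((1 + α) * N) := by rw [hv]; field_simp; ring

theorem PB_le_of_le_abs_sub {α δ : ℝ} (hα : 0 < α) {r M N : ℕ} {K n : Fin r → ℕ}
    (hK : ∀ j, 0 < K j) (hKM : ∑ j, K j = M) (hnN : ∑ j, n j = N) (hαM : α * M = N)
    (hδ : 0 ≤ δ) (hδN : δ ≤ 1 / 16 * N) {i : Fin r} (hi : δ ≤ |n i - α * K i|) :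
    PB M n K ≤ exp 1 ^ 2 * √(1 + α) / √(2 * π) * √N * exp (-δ ^ 2 / ((1 + α) * N)) := by
  have hM : 0 < M := hKM ▸ (hK i).trans_le (single_le_sum (fun j _ ↦ (K j).zero_le) (mem_univ i))
  have hN : (0 : ℝ) < N := hαM ▸ mul_pos hα (by exact_mod_cast hM)
  have hnum : ∏ j, negBinomial α (K j) (n j) ≤ exp (-δ ^ 2 / ((1 + α) * N)) :=
    prod_negBinomial_le_exp_neg_sq hα (hKM ▸ hM) (by rw [← hαM, ← hKM]; push_cast; rfl)
      (by exact_mod_cast hnN) hδ hδN hi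
  calc PB M n K
      = (∏ j, negBinomial α (K j) (n j)) / negBinomial α M N := by
        rw [PB_eq_prod_negBinomial_div hα hK hKM hM, hnN]
    _ ≤ exp (-δ ^ 2 / ((1 + α) * N)) / (√(2 * π) / (exp 1 ^ 2 * √((1 + α) * N))) := by
        gcongr
        exact le_negBinomial_of_mul_eq hα hM hαM
    _ = exp 1 ^ 2 * √(1 + α) / √(2 * π) * √N * exp (-δ ^ 2 / ((1 + α) * N)) := by
        rw [sqrt_mul (by positivity : 0 ≤ 1 + α)]; field_simp

theorem eventually_mul_rpow_le_mul_natCast (c : ℝ) {d p : ℝ} (hd : 0 < d) (hp : p < 1) :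
    ∀ᶠ N : ℕ in Filter.atTop, c * (N : ℝ) ^ p ≤ d * N := by
  have hlim : Filter.Tendsto (fun N : ℕ ↦ c * (N : ℝ) ^ (p - 1)) Filter.atTop (nhds 0) := by
    simpa [Function.comp_def] using ((tendsto_rpow_neg_atTop (sub_pos.2 hp)).comp
      tendsto_natCast_atTop_atTop).const_mul c
  filter_upwards [hlim.eventually_le_const hd, Filter.eventually_gt_atTop 0] with N hN hN₀
  have hN₀' : (0 : ℝ) < N := by exact_mod_cast hN₀
  rwa [rpow_sub_one hN₀'.ne', ← mul_div_assoc, div_le_iff₀ hN₀'] at hN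

theorem sq_mul_rpow_div {N : ℝ} (hN : 0 < N) (A p : ℝ) :
    (A * N ^ p) ^ 2 / N = A ^ 2 * N ^ (2 * p - 1) := by
  rw [mul_pow, mul_div_assoc, ← rpow_mul_natCast hN.le, ← rpow_sub_one hN.ne',
    mul_comm p, Nat.cast_ofNat]

theorem tail_bound_bosons_general {α A ε : ℝ} (hα : 0 < α) (hA : 0 ≤ A) (hε : -(1 / 3) < ε) :
    ∃ C > 0, ∃ N₀ : ℕ, ∀ N : ℕ, N₀ ≤ N → ∀ M : ℕ, α * M = N →
      ∀ (r : ℕ) (q : Fin r → ℝ), (∀ i, 0 < q i) → ∑ i, q i = 1 →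
      ∀ K : Fin r → ℕ, (∀ i, (K i : ℝ) = q i * M) →
      ∀ n : Fin r → ℕ, ∑ i, n i = N →
      (∃ i, A * (N : ℝ) ^ ((2 : ℝ) / 3 - ε) < |n i - N * q i|) →
      PB M n K ≤ C * √N * exp (-(A ^ 2) * (N : ℝ) ^ ((1 : ℝ) / 3 - 2 * ε) / (1 + α)) := by
  obtain ⟨N₀, hN₀⟩ := Filter.eventually_atTop.1 <|
    (eventually_mul_rpow_le_mul_natCast A (by norm_num : (0 : ℝ) < 1 / 16)
      (by linarith : 2 / 3 - ε < 1)).and (Filter.eventually_gt_atTop 0)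
  refine ⟨exp 1 ^ 2 * √(1 + α) / √(2 * π), by positivity, N₀, ?_⟩
  rintro N hN M hαM r q hq hqsum K hK n hn ⟨i, hi⟩
  obtain ⟨hδN, hNpos⟩ := hN₀ N hN
  have hN' : (0 : ℝ) < N := by exact_mod_cast hNpos
  have hM : (0 : ℝ) < M := pos_of_mul_pos_right (hαM ▸ hN') hα.le
  have hKpos (j : Fin r) : 0 < K j := by exact_mod_cast hK j ▸ mul_pos (hq j) hM
  have hKM : ∑ j, K j = M := by
    have : ∑ j, (K j : ℝ) = M := by simp_rw [hK, ← sum_mul, hqsum, one_mul]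
    exact_mod_cast this
  have hmean : (N : ℝ) * q i = α * K i := by rw [hK, ← hαM]; ring
  refine (PB_le_of_le_abs_sub hα hKpos hKM hn hαM (by positivity) hδN (hmean ▸ hi.le)).trans_eq ?_
  congr 2
  rw [mul_comm (1 + α), ← div_div, neg_div, sq_mul_rpow_div hN', neg_mul]
  ring_nf

/-- Tail bound for bosons at fixed density `α = N/M`: any count vector violating
the central-region condition `|nᵢ - N qᵢ| ≤ A N^(2/3-ε)` for some `i` has
average probability at most `C √N exp(-A² N^(1/3-2ε)/(1+α))`. -/
theorem tail_bound_bosons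
    (r : ℕ) (hr : 2 ≤ r) (q : Fin r → ℚ)
    (hq0 : ∀ i, 0 < q i) (hq1 : ∀ i, q i < 1) (hqsum : ∑ i, q i = 1)
    (α : ℚ) (hα : 0 < α)
    (A ε : ℝ) (hA : 0 < A) (hε0 : 0 < ε) (hε1 : ε < 1 / 6) :
    ∃ C > 0, ∃ N₀ : ℕ, ∀ N : ℕ, N₀ ≤ N → ∀ M : ℕ, α * M = N →
      ∀ K : Fin r → ℕ, (∀ i, (K i : ℚ) = q i * M) →
      ∀ n : Fin r → ℕ, ∑ i, n i = N →
      (∃ i, A * (N : ℝ) ^ ((2 : ℝ) / 3 - ε) < |(n i : ℝ) - (N : ℝ) * (q i : ℝ)|) →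
      PB M n K ≤ C * Real.sqrt N *
        Real.exp (-(A ^ 2) * (N : ℝ) ^ ((1 : ℝ) / 3 - 2 * ε) / (1 + (α : ℝ))) := by
  obtain ⟨C, hC, N₀, hbound⟩ := tail_bound_bosons_general (α := α) (by exact_mod_cast hα) hA.le
    (by linarith : -(1 / 3) < ε)
  exact ⟨C, hC, N₀, fun N hN M hM K hK n hn hdev ↦ hbound N hN M (by exact_mod_cast hM) r
    (fun i ↦ q i) (by exact_mod_cast hq0) (by exact_mod_cast hqsum) K
    (fun i ↦ by exact_mod_cast hK i) n hn hdev⟩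
end

section
/- Let M ≥ 1 and N ≥ 1 be natural numbers, let U be Haar-distributed on the unitary group U(M) (the group of M×M complex unitary matrices with its Haar probability measure), and let k, k', l : Fin N → Fin M be index tuples. For an M×M matrix U define the N×N matrices A(U)_{ij} = U_{k_i, l_j} and B(U)_{ij} = U_{k'_i, l_j}, and let per denote the permanent, per(A) = ∑_{σ ∈ S_N} ∏_{i} A_{i, σ(i)}. Let n_p = #{i : k_i = p}, m_p = #{i : k'_i = p} and s_p = #{j : l_j = p} for p ∈ Fin M. Then ∫ per(A(U)) · conj(per(B(U))) dU equals (∏_p n_p!) · (∏_p s_p!) · N! · (M−1)!/(M+N−1)! if n_p = m_p for all p, and equals 0 otherwise. -/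
open MeasureTheory Finset

/-- The permanent of an `N × N` complex matrix: `per A = ∑_{σ ∈ S_N} ∏ᵢ A_{i,σ(i)}`. -/
noncomputable def perm {N : ℕ} (A : Matrix (Fin N) (Fin N) ℂ) : ℂ :=
  ∑ σ : Equiv.Perm (Fin N), ∏ i, A i (σ i)

/-!
Write `Φ(k, k'; l, l')` for the average of `per U[k, l] * conj (per U[k', l'])`. By the
Cauchy–Binet expansion of permanents, left invariance of the measure says that `Φ` is an invariant
form on the symmetric power `Symᴺ ℂᴹ`. Invariance under diagonal matrices kills
`Φ(k, k'; l, l')` unless `k` and `k'` agree up to a permutation. Invariance under a matrix with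
row `z` of squared moduli `t` gives `∑ₖ |class of k| Φ(k, k; l, l') ∏ᵢ t (k i) = Φ(z, z; l, l')` for
every point `t` of the simplex, so all `|class of k| Φ(k, k; l, l')` are equal. Inversion exchanges
the roles of rows and columns, hence `Φ(k, k; l, l)` is a constant divided by
`|class of k| |class of l|`. The constant comes from the rows of `U` being unit vectors.
-/

open scoped ComplexConjugate

section Content

variable {ι n : Type*} [Fintype ι]

/-- The content of a tuple: the multiplicity with which it takes each value. It classifies tuples
up to permutation, and as an exponent it is the monomial `∏ i, X (k i)`. -/
noncomputable def content (k : ι → n) : n →₀ ℕ := ∑ i, Finsupp.single (k i) 1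

lemma content_apply [DecidableEq n] (k : ι → n) (p : n) : content k p = #{i | k i = p} := by
  simp [content, Finsupp.finsetSum_apply, Finsupp.single_apply, sum_boole]

lemma content_comp_equiv {κ : Type*} [Fintype κ] (k : ι → n) (e : κ ≃ ι) :
    content (k ∘ e) = content k :=
  Equiv.sum_comp e fun i => Finsupp.single (k i) 1

lemma content_eq_content_iff {k k' : ι → n} :
    content k = content k' ↔ ∃ σ : Equiv.Perm ι, k' = k ∘ σ := by
  classical
  refine ⟨fun h => ?_, ?_⟩
  · have fiberEquiv (p : n) : Nonempty ({i // k' i = p} ≃ {i // k i = p}) := by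
      refine ⟨Fintype.equivOfCardEq ?_⟩
      simpa only [content_apply, Fintype.card_subtype] using (DFunLike.congr_fun h p).symm
    exact ⟨Equiv.ofFiberEquiv fun p => (fiberEquiv p).some,
      funext fun i => (Equiv.ofFiberEquiv_map _ i).symm⟩
  · rintro ⟨σ, rfl⟩
    exact (content_comp_equiv k σ).symm

lemma prod_comp_eq_of_content_eq {R : Type*} [CommMonoid R] {k k' : ι → n}
    (h : content k = content k') (f : n → R) : ∏ i, f (k i) = ∏ i, f (k' i) := by
  obtain ⟨σ, rfl⟩ := content_eq_content_iff.1 h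
  exact (Equiv.prod_comp σ fun i => f (k i)).symm

lemma prod_X_comp {R : Type*} [CommSemiring R] (k : ι → n) :
    ∏ i, (MvPolynomial.X (k i) : MvPolynomial n R) = MvPolynomial.monomial (content k) 1 :=
  (MvPolynomial.monomial_sum_one univ fun i => Finsupp.single (k i) 1).symm

lemma exists_unimodular_prod_comp_ne {k k' : ι → n} (h : content k ≠ content k') :
    ∃ θ : n → ℂ, (∀ p, ‖θ p‖ = 1) ∧ ∏ i, θ (k i) ≠ ∏ i, θ (k' i) := by
  classical
  obtain ⟨p, hp⟩ := DFunLike.ne_iff.1 h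
  let N := content k p + content k' p + 1
  let ζ := Complex.exp (2 * Real.pi * Complex.I / N)
  have ζ_primitive : IsPrimitiveRoot ζ N := Complex.isPrimitiveRoot_exp N (by omega)
  have prod_eq (j : ι → n) : ∏ i, (if j i = p then ζ else 1) = ζ ^ content j p := by
    rw [content_apply, prod_ite]
    simp
  refine ⟨fun q => if q = p then ζ else 1, fun q => ?_, ?_⟩
  · simp only [apply_ite norm, ζ_primitive.norm'_eq_one (by omega), norm_one, ite_self]
  · rw [prod_eq, prod_eq]
    exact fun hζ => hp (ζ_primitive.pow_inj (by omega) (by omega) hζ)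

variable [Fintype n]

lemma sum_content (k : ι → n) : ∑ p, content k p = Fintype.card ι := by
  classical
  simp_rw [content_apply]
  exact (card_eq_sum_card_fiberwise fun i _ => mem_univ (k i)).symm

lemma exists_content_eq {f : n →₀ ℕ} (hf : ∑ p, f p = Fintype.card ι) :
    ∃ k : ι → n, content k = f := by
  have e : ι ≃ Σ p, Fin (f p) := Fintype.equivOfCardEq (by simp [hf])
  refine ⟨Sigma.fst ∘ e, ?_⟩
  rw [content_comp_equiv, content, Fintype.sum_sigma]
  simp

variable [DecidableEq ι] [DecidableEq n]

/-- The rearrangements of a tuple `k`, that is, the tuples with the same content. -/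
noncomputable def contentClass (k : ι → n) : Finset (ι → n) := {k' | content k' = content k}

lemma mem_contentClass {k k' : ι → n} : k' ∈ contentClass k ↔ content k' = content k := by
  simp [contentClass]

lemma contentClass_congr {k k' : ι → n} (h : content k = content k') :
    contentClass k = contentClass k' := by
  simp only [contentClass, h]

lemma card_contentClass_ne_zero (k : ι → n) : (#(contentClass k) : ℂ) ≠ 0 :=
  Nat.cast_ne_zero.2 (card_ne_zero_of_mem (mem_contentClass.2 rfl : k ∈ contentClass k))

lemma card_contentClass_mul_prod_factorial (k : ι → n) :
    #(contentClass k) * ∏ p, (#{i | k i = p}).factorial = (Fintype.card ι).factorial := by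
  have fiber_card (τ : Equiv.Perm ι) :
      #{σ : Equiv.Perm ι | k ∘ σ = k ∘ τ} = ∏ p, (#{i | k i = p}).factorial := by
    have stabilizer := DomMulAct.stabilizer_card k
    simp only [Fintype.card_subtype] at stabilizer
    rw [← stabilizer]
    refine card_equiv (Equiv.mulRight τ⁻¹) fun σ => ?_
    simp only [mem_filter, mem_univ, true_and, Equiv.coe_mulRight, Equiv.Perm.coe_mul,
      ← Function.comp_assoc]
    exact (Equiv.comp_symm_eq τ k (k ∘ σ)).symm
  rw [← Fintype.card_perm, ← card_univ, card_eq_sum_card_fiberwise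
    (f := fun σ : Equiv.Perm ι => k ∘ σ) (t := contentClass k)
    (fun σ _ => mem_contentClass.2 (content_comp_equiv k σ)), ← smul_eq_mul, ← sum_const]
  refine sum_congr rfl fun k' hk' => ?_
  obtain ⟨τ, rfl⟩ := content_eq_content_iff.1 (mem_contentClass.1 hk').symm
  exact (fiber_card τ).symm

lemma prod_factorial_eq_div (k : ι → n) :
    ∏ p, ((#{i | k i = p}).factorial : ℂ) = (Fintype.card ι).factorial / #(contentClass k) := by
  rw [eq_div_iff (card_contentClass_ne_zero k), mul_comm]
  exact_mod_cast card_contentClass_mul_prod_factorial k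

lemma card_image_content :
    #((univ : Finset (ι → n)).image content) =
      (Fintype.card n + Fintype.card ι - 1).choose (Fintype.card ι) := by
  rw [← card_univ (α := n), ← card_finsuppAntidiag_nat_eq_choose]
  congr 1
  ext f
  simp only [mem_image, mem_univ, true_and, mem_finsuppAntidiag, subset_univ, and_true]
  exact ⟨fun ⟨k, hk⟩ => hk ▸ sum_content k, exists_content_eq⟩

lemma sum_inv_card_contentClass :
    ∑ k : ι → n, (#(contentClass k) : ℂ)⁻¹ =
      (Fintype.card n + Fintype.card ι - 1).choose (Fintype.card ι) := by
  rw [← card_image_content, card_eq_sum_ones, Nat.cast_sum]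
  refine (sum_image' _ fun k _ => ?_).symm
  have inv_const (j : ι → n) (hj : j ∈ contentClass k) :
      (#(contentClass j) : ℂ)⁻¹ = (#(contentClass k) : ℂ)⁻¹ := by
    rw [contentClass_congr (mem_contentClass.1 hj)]
  change _ = ∑ j ∈ contentClass k, _
  rw [sum_congr rfl inv_const, sum_const, nsmul_eq_mul,
    mul_inv_cancel₀ (card_contentClass_ne_zero k), Nat.cast_one]

end Content

section Simplex

variable {ι n : Type*} [Fintype ι] [DecidableEq ι] [Fintype n]

lemma sum_prod_comp {R : Type*} [CommSemiring R] (f : n → R) :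
    ∑ k : ι → n, ∏ i, f (k i) = (∑ p, f p) ^ Fintype.card ι := by
  rw [← card_univ, ← prod_const, prod_univ_sum, Fintype.piFinset_univ]

lemma eq_zero_of_sum_mul_prod_eq_zero {w : (ι → n) → ℂ}
    (hw : ∀ k k', content k = content k' → w k = w k')
    (h : ∀ t : n → ℝ, (∀ p, 0 < t p) → ∑ k, w k * ∏ i, (t (k i) : ℂ) = 0) (k : ι → n) :
    w k = 0 := by
  classical
  let P : MvPolynomial n ℂ := ∑ k, MvPolynomial.C (w k) * ∏ i, MvPolynomial.X (k i)
  have P_eq_zero : P = 0 := by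
    refine MvPolynomial.funext_set (fun _ => Complex.ofReal '' Set.Ioi 0)
      (fun _ => (Set.Ioi_infinite 0).image Complex.ofReal_injective.injOn) fun s hs => ?_
    choose t t_pos t_eq using fun p => hs p trivial
    obtain rfl : (fun p => (t p : ℂ)) = s := funext t_eq
    simpa [P] using h t t_pos
  have coeff_P : P.coeff (content k) = #(contentClass k) * w k := by
    simp only [P, prod_X_comp, MvPolynomial.coeff_sum, MvPolynomial.coeff_C_mul,
      MvPolynomial.coeff_monomial, mul_ite, mul_one, mul_zero]
    rw [← sum_filter]
    change ∑ j ∈ contentClass k, _ = _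
    rw [sum_congr rfl fun j hj => hw j k (mem_contentClass.1 hj), sum_const, nsmul_eq_mul]
  rw [P_eq_zero, MvPolynomial.coeff_zero] at coeff_P
  exact (mul_eq_zero.1 coeff_P.symm).resolve_left (card_contentClass_ne_zero k)

lemma eq_of_sum_mul_prod_eq_on_stdSimplex [Nonempty n] {w : (ι → n) → ℂ} {c : ℂ}
    (hw : ∀ k k', content k = content k' → w k = w k')
    (h : ∀ t ∈ stdSimplex ℝ n, ∑ k, w k * ∏ i, (t (k i) : ℂ) = c) (k : ι → n) :
    w k = c := by
  refine sub_eq_zero.1 (eq_zero_of_sum_mul_prod_eq_zero (w := fun k => w k - c)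
    (fun k k' hk => by rw [hw k k' hk]) (fun t t_pos => ?_) k)
  set S : ℝ := ∑ p, t p with hS
  have S_pos : 0 < S := sum_pos (fun p _ => t_pos p) univ_nonempty
  have S_ne : (S : ℂ) ≠ 0 := Complex.ofReal_ne_zero.2 S_pos.ne'
  have normalized : ∑ k, w k * ∏ i, ((t (k i) / S : ℝ) : ℂ) = c :=
    h (fun p => t p / S) ⟨fun p => (div_pos (t_pos p) S_pos).le, by
      rw [← sum_div, div_self S_pos.ne']⟩
  have sum_prod : ∑ k : ι → n, ∏ i, (t (k i) : ℂ) = (S : ℂ) ^ Fintype.card ι := by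
    rw [hS, Complex.ofReal_sum, sum_prod_comp fun p => (t p : ℂ)]
  simp only [Complex.ofReal_div, prod_div_distrib, prod_const, card_univ, ← mul_div_assoc,
    ← sum_div] at normalized
  rw [div_eq_iff (pow_ne_zero _ S_ne)] at normalized
  simp only [sub_mul, sum_sub_distrib, ← mul_sum, sum_prod, normalized, sub_self]

end Simplex

section Permanent

variable {ι m n R : Type*} [Fintype ι] [DecidableEq ι] [CommSemiring R]

lemma permanent_submatrix_comp_left (A : Matrix m n R) (k : ι → m) (l : ι → n)
    (σ : Equiv.Perm ι) : (A.submatrix (k ∘ σ) l).permanent = (A.submatrix k l).permanent :=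
  Matrix.permanent_permute_cols σ (A.submatrix k l)

lemma permanent_submatrix_congr_left (A : Matrix m n R) {k k' : ι → m} (l : ι → n)
    (h : content k = content k') :
    (A.submatrix k l).permanent = (A.submatrix k' l).permanent := by
  obtain ⟨σ, rfl⟩ := content_eq_content_iff.1 h
  exact (permanent_submatrix_comp_left A k l σ).symm

lemma permanent_submatrix_const_left (A : Matrix m n R) (z : m) (l : ι → n) :
    (A.submatrix (fun _ => z) l).permanent = (Fintype.card ι).factorial * ∏ j, A z (l j) := by
  simp [Matrix.permanent, Fintype.card_perm]

/-- The Cauchy–Binet expansion: the permanents of submatrices with rows `k` transform like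
symmetric tensors. -/
lemma permanent_submatrix_mul [Fintype m] {o : Type*} (A : Matrix o m R) (B : Matrix m n R)
    (r : ι → o) (l : ι → n) :
    ((A * B).submatrix r l).permanent =
      ∑ k : ι → m, (∏ i, A (r i) (k i)) * (B.submatrix k l).permanent := by
  simp only [Matrix.permanent, Matrix.submatrix_apply, Matrix.mul_apply, prod_univ_sum,
    Fintype.piFinset_univ, mul_sum]
  rw [sum_comm (s := (univ : Finset (ι → m)))]
  refine sum_congr rfl fun σ _ => ?_
  rw [← (Equiv.arrowCongr σ.symm (Equiv.refl m)).sum_comp]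
  refine sum_congr rfl fun k _ => ?_
  rw [← Equiv.prod_comp σ fun i => A (r i) (k i), ← prod_mul_distrib]
  rfl

lemma permanent_conjTranspose_submatrix [StarRing R] (A : Matrix m n R) (k : ι → n) (l : ι → m) :
    (A.conjTranspose.submatrix k l).permanent = star (A.submatrix l k).permanent := by
  rw [← Matrix.permanent_transpose]
  simp [Matrix.permanent]

end Permanent

section Unitary

variable {n : Type*} [Fintype n] [DecidableEq n]

instance instCompactSpaceUnitaryGroup : CompactSpace (Matrix.unitaryGroup n ℂ) := by
  have unit_entries_compact :
      IsCompact {A : Matrix n n ℂ | ∀ i j, A i j ∈ Metric.closedBall (0 : ℂ) 1} :=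
    isCompact_pi_infinite fun _ => isCompact_pi_infinite fun _ => isCompact_closedBall 0 1
  have unitary_closed : IsClosed (Matrix.unitaryGroup n ℂ : Set (Matrix n n ℂ)) :=
    isClosed_unitary
  refine isCompact_iff_compactSpace.1 <|
    unit_entries_compact.of_isClosed_subset unitary_closed fun U hU i j => ?_
  simpa using entry_norm_bound_of_unitary hU i j

lemma diagonal_mem_unitaryGroup {θ : n → ℂ} (hθ : ∀ p, ‖θ p‖ = 1) :
    Matrix.diagonal θ ∈ Matrix.unitaryGroup n ℂ := by
  rw [Matrix.mem_unitaryGroup_iff, Matrix.star_eq_conjTranspose, Matrix.diagonal_conjTranspose,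
    Matrix.diagonal_mul_diagonal, ← Matrix.diagonal_one]
  congr 1
  funext p
  simp [Complex.mul_conj', hθ]

lemma sum_row_mul_conj_row (U : Matrix.unitaryGroup n ℂ) (z : n) :
    ∑ p, (U : Matrix n n ℂ) z p * conj ((U : Matrix n n ℂ) z p) = 1 := by
  simpa [Matrix.mul_apply] using congrFun₂ (Matrix.mem_unitaryGroup_iff.1 U.2) z z

lemma exists_unitary_row_mul_conj_row_eq (z : n) {t : n → ℝ} (ht : t ∈ stdSimplex ℝ n) :
    ∃ V : Matrix.unitaryGroup n ℂ,
      ∀ p, (V : Matrix n n ℂ) z p * conj ((V : Matrix n n ℂ) z p) = t p := by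
  let v : EuclideanSpace ℂ n := WithLp.toLp 2 fun p => (√(t p) : ℂ)
  have v_norm : ‖v‖ = 1 := by
    simp [v, EuclideanSpace.norm_eq, Real.sq_sqrt (ht.1 _), ht.2]
  have v_orthonormal : Orthonormal ℂ (({z} : Set n).domRestrict fun _ => v) :=
    ⟨fun _ => v_norm, fun i j hij => absurd (Subsingleton.elim i j) hij⟩
  obtain ⟨b, hb⟩ := v_orthonormal.exists_orthonormalBasis_extension_of_card_eq (by simp)
  let V : Matrix n n ℂ := b.toBasis.toMatrix (EuclideanSpace.basisFun n ℂ)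
  have V_row (p : n) : V z p = √(t p) := by
    simp [V, Module.Basis.toMatrix_apply, b.repr_apply_apply, hb z rfl, v,
      EuclideanSpace.inner_single_right]
  refine ⟨⟨V, b.toMatrix_orthonormalBasis_mem_unitary _⟩, fun p => ?_⟩
  change V z p * conj (V z p) = t p
  rw [V_row, Complex.conj_ofReal, ← Complex.ofReal_mul, Real.mul_self_sqrt (ht.1 p)]

end Unitary

section HaarMeasure

variable {G : Type*} [TopologicalSpace G] [Group G] [IsTopologicalGroup G] [LocallyCompactSpace G]
  [MeasurableSpace G] [BorelSpace G] (μ : Measure G) [μ.IsHaarMeasure] [IsProbabilityMeasure μ]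

lemma isMulRightInvariant_of_isProbabilityMeasure : μ.IsMulRightInvariant where
  map_mul_right_eq_self g := by
    have : IsProbabilityMeasure (μ.map (· * g)) :=
      Measure.isProbabilityMeasure_map (by fun_prop)
    exact Measure.isHaarMeasure_eq_of_isProbabilityMeasure _ _

lemma isInvInvariant_of_isProbabilityMeasure : μ.IsInvInvariant where
  inv_eq_self := by
    have := isMulRightInvariant_of_isProbabilityMeasure μ
    have : IsProbabilityMeasure μ.inv := Measure.isProbabilityMeasure_map (by fun_prop)
    have : μ.inv.IsOpenPosMeasure :=
      continuous_inv.isOpenPosMeasure_map inv_surjective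
    have : μ.inv.IsHaarMeasure := { }
    exact Measure.isHaarMeasure_eq_of_isProbabilityMeasure _ _

end HaarMeasure

section Correlation

variable {ι n : Type*} [Fintype ι] [DecidableEq ι] [Fintype n] [DecidableEq n]
  [MeasurableSpace (Matrix.unitaryGroup n ℂ)]

/-- The average over `U` of `per U[k, l] * conj (per U[k', l'])`, where `U[k, l]` is the matrix with
entries `U (k i) (l j)`. -/
noncomputable def permanentCorr (μ : Measure (Matrix.unitaryGroup n ℂ)) (k k' l l' : ι → n) : ℂ :=
  ∫ U, ((U : Matrix n n ℂ).submatrix k l).permanent *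
    conj ((U : Matrix n n ℂ).submatrix k' l').permanent ∂μ

variable (μ : Measure (Matrix.unitaryGroup n ℂ))

lemma permanentCorr_congr_rows {k₁ k₂ k₁' k₂' : ι → n} (h : content k₁ = content k₂)
    (h' : content k₁' = content k₂') (l l' : ι → n) :
    permanentCorr μ k₁ k₁' l l' = permanentCorr μ k₂ k₂' l l' := by
  simp only [permanentCorr, permanent_submatrix_congr_left _ _ h,
    permanent_submatrix_congr_left _ _ h']

variable [BorelSpace (Matrix.unitaryGroup n ℂ)]

lemma integrable_permanent_mul_conj_permanent [IsFiniteMeasureOnCompacts μ] (k k' l l' : ι → n) :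
    Integrable (fun U : Matrix.unitaryGroup n ℂ =>
      ((U : Matrix n n ℂ).submatrix k l).permanent *
        conj ((U : Matrix n n ℂ).submatrix k' l').permanent) μ := by
  have continuous_permanent (k l : ι → n) : Continuous fun U : Matrix.unitaryGroup n ℂ =>
      ((U : Matrix n n ℂ).submatrix k l).permanent :=
    continuous_finsetSum _ fun σ _ => continuous_finsetProd _ fun i _ =>
      continuous_subtype_val.matrix_elem _ _
  exact ((continuous_permanent k l).mul
    (Complex.continuous_conj.comp (continuous_permanent k' l'))).integrable_of_hasCompactSupport
      (HasCompactSupport.of_compactSpace _)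

lemma permanentCorr_eq_sum [IsFiniteMeasureOnCompacts μ] [μ.IsMulLeftInvariant]
    (V : Matrix.unitaryGroup n ℂ) (r r' l l' : ι → n) :
    permanentCorr μ r r' l l' =
      ∑ k, ∑ k', (∏ i, (V : Matrix n n ℂ) (r i) (k i)) *
        conj (∏ i, (V : Matrix n n ℂ) (r' i) (k' i)) * permanentCorr μ k k' l l' := by
  have integrable_term (k k' : ι → n) (c : ℂ) :=
    (integrable_permanent_mul_conj_permanent μ k k' l l').const_mul c
  rw [permanentCorr, ← integral_mul_left_eq_self _ V]
  simp only [Matrix.UnitaryGroup.mul_val, permanent_submatrix_mul, map_sum, sum_mul_sum,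
    permanentCorr, ← integral_const_mul, map_mul, mul_mul_mul_comm _ _ (conj _)]
  rw [integral_finsetSum _ fun k _ => integrable_finsetSum _ fun k' _ => integrable_term k k' _]
  exact sum_congr rfl fun k _ => integral_finsetSum _ fun k' _ => integrable_term k k' _

lemma permanentCorr_eq_zero_of_content_ne_left [IsFiniteMeasureOnCompacts μ]
    [μ.IsMulLeftInvariant] {k k' : ι → n} (h : content k ≠ content k') (l l' : ι → n) :
    permanentCorr μ k k' l l' = 0 := by
  obtain ⟨θ, θ_norm, θ_prod_ne⟩ := exists_unimodular_prod_comp_ne h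
  have phase : permanentCorr μ k k' l l' =
      (∏ i, θ (k i)) * conj (∏ i, θ (k' i)) * permanentCorr μ k k' l l' := by
    conv_lhs => rw [permanentCorr_eq_sum μ ⟨_, diagonal_mem_unitaryGroup θ_norm⟩]
    simp [Matrix.diagonal_apply, Fintype.prod_ite_zero, ← funext_iff, apply_ite conj, ite_mul]
  have θ_prod_unimodular : conj (∏ i, θ (k' i)) * ∏ i, θ (k' i) = 1 := by
    simp only [map_prod, ← prod_mul_distrib, Complex.conj_mul', θ_norm, Complex.ofReal_one,
      one_pow, prod_const_one]
  by_contra corr_ne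
  refine θ_prod_ne ?_
  have phase_eq_one := (mul_eq_right₀ corr_ne).1 phase.symm
  calc ∏ i, θ (k i) = (∏ i, θ (k i)) * conj (∏ i, θ (k' i)) * ∏ i, θ (k' i) := by
        rw [mul_assoc, θ_prod_unimodular, mul_one]
    _ = ∏ i, θ (k' i) := by rw [phase_eq_one, one_mul]

lemma permanentCorr_eq_sum_contentClass [IsFiniteMeasureOnCompacts μ] [μ.IsMulLeftInvariant]
    (V : Matrix.unitaryGroup n ℂ) (z : n) (l l' : ι → n) :
    permanentCorr μ (fun _ => z) (fun _ => z) l l' =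
      ∑ k, #(contentClass k) * permanentCorr μ k k l l' *
        ∏ i, (V : Matrix n n ℂ) z (k i) * conj ((V : Matrix n n ℂ) z (k i)) := by
  rw [permanentCorr_eq_sum μ V]
  refine sum_congr rfl fun k _ => ?_
  rw [← sum_subset (subset_univ (contentClass k)) fun k' _ hk' => ?_]
  · rw [mul_assoc, ← nsmul_eq_mul, ← sum_const]
    refine sum_congr rfl fun k' hk' => ?_
    have hk := mem_contentClass.1 hk'
    rw [permanentCorr_congr_rows μ rfl hk, prod_comp_eq_of_content_eq hk, prod_mul_distrib,
      map_prod, mul_comm]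
  · rw [permanentCorr_eq_zero_of_content_ne_left μ (fun h => hk' (mem_contentClass.2 h.symm)),
      mul_zero]

lemma card_contentClass_mul_permanentCorr [IsFiniteMeasureOnCompacts μ] [μ.IsMulLeftInvariant]
    (z : n) (k l l' : ι → n) :
    #(contentClass k) * permanentCorr μ k k l l' =
      permanentCorr μ (fun _ => z) (fun _ => z) l l' := by
  have : Nonempty n := ⟨z⟩
  refine eq_of_sum_mul_prod_eq_on_stdSimplex
    (w := fun k => #(contentClass k) * permanentCorr μ k k l l') (fun k k' h => ?_)
    (fun t ht => ?_) k
  · simp only [contentClass_congr h, permanentCorr_congr_rows μ h h]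
  · obtain ⟨V, hV⟩ := exists_unitary_row_mul_conj_row_eq z ht
    simp only [permanentCorr_eq_sum_contentClass μ V z, hV]

lemma permanentCorr_swap [μ.IsInvInvariant] (k k' l l' : ι → n) :
    permanentCorr μ k k' l l' = permanentCorr μ l' l k' k := by
  rw [permanentCorr, ← integral_inv_eq_self]
  refine integral_congr_ae (Filter.Eventually.of_forall fun U => ?_)
  have inv_submatrix (r c : ι → n) :
      ((U⁻¹ : Matrix.unitaryGroup n ℂ) : Matrix n n ℂ).submatrix r c =
        (U : Matrix n n ℂ).conjTranspose.submatrix r c := rfl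
  simp only [inv_submatrix, permanent_conjTranspose_submatrix, Complex.star_def,
    Complex.conj_conj, mul_comm]

lemma sum_permanentCorr_const [IsProbabilityMeasure μ] (z : n) :
    ∑ l : ι → n, permanentCorr μ (fun _ => z) (fun _ => z) l l =
      ((Fintype.card ι).factorial : ℂ) ^ 2 := by
  have sum_prod_row (U : Matrix.unitaryGroup n ℂ) :
      ∑ l : ι → n, ∏ j, (U : Matrix n n ℂ) z (l j) * conj ((U : Matrix n n ℂ) z (l j)) = 1 := by
    rw [sum_prod_comp fun p => (U : Matrix n n ℂ) z p * conj ((U : Matrix n n ℂ) z p),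
      sum_row_mul_conj_row, one_pow]
  simp only [permanentCorr]
  rw [← integral_finsetSum _ fun l _ => integrable_permanent_mul_conj_permanent μ _ _ l l]
  simp only [permanent_submatrix_const_left, map_mul, map_natCast, map_prod,
    mul_mul_mul_comm _ (∏ _, _), ← prod_mul_distrib, ← mul_sum, sum_prod_row]
  simp [sq]

lemma permanentCorr_self [Nonempty n] [IsProbabilityMeasure μ] [μ.IsMulLeftInvariant]
    [μ.IsInvInvariant] (k l : ι → n) :
    permanentCorr μ k k l l = ((Fintype.card ι).factorial : ℂ) ^ 2 /
      (#(contentClass k) * #(contentClass l) *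
        (Fintype.card n + Fintype.card ι - 1).choose (Fintype.card ι)) := by
  obtain ⟨z⟩ := ‹Nonempty n›
  set e := permanentCorr μ (fun _ : ι => z) (fun _ => z) (fun _ => z) fun _ => z
  have const_row (l : ι → n) :
      permanentCorr μ (fun _ => z) (fun _ => z) l l = e * (#(contentClass l) : ℂ)⁻¹ := by
    rw [permanentCorr_swap, eq_mul_inv_iff_mul_eq₀ (card_contentClass_ne_zero l), mul_comm,
      card_contentClass_mul_permanentCorr μ z]
  have e_mul_choose : e * (Fintype.card n + Fintype.card ι - 1).choose (Fintype.card ι) =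
      ((Fintype.card ι).factorial : ℂ) ^ 2 := by
    rw [← sum_permanentCorr_const μ z, ← sum_inv_card_contentClass, mul_sum]
    exact sum_congr rfl fun l _ => (const_row l).symm
  have choose_ne : ((Fintype.card n + Fintype.card ι - 1).choose (Fintype.card ι) : ℂ) ≠ 0 :=
    Nat.cast_ne_zero.2 (Nat.choose_pos (by have := Fintype.card_pos_iff.2 ⟨z⟩; omega)).ne'
  have reduce := card_contentClass_mul_permanentCorr μ z k l l
  rw [const_row] at reduce
  have card_k_ne := card_contentClass_ne_zero k
  have card_l_ne := card_contentClass_ne_zero l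
  rw [← e_mul_choose]
  field_simp at reduce ⊢
  linear_combination reduce

lemma permanentCorr_eq_ite [IsFiniteMeasureOnCompacts μ] [μ.IsMulLeftInvariant] [μ.IsInvInvariant]
    (k k' l l' : ι → n) :
    permanentCorr μ k k' l l' =
      if content k = content k' ∧ content l = content l' then permanentCorr μ k k l l else 0 := by
  split_ifs with h
  · rw [permanentCorr_congr_rows μ rfl h.1.symm, permanentCorr_swap,
      permanentCorr_congr_rows μ h.2.symm rfl, permanentCorr_swap]
  · rcases not_and_or.1 h with hk | hl
    · exact permanentCorr_eq_zero_of_content_ne_left μ hk l l'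
    · rw [permanentCorr_swap, permanentCorr_eq_zero_of_content_ne_left μ (Ne.symm hl)]

end Correlation

lemma perm_eq_permanent_submatrix {N : ℕ} {m n : Type*} (A : Matrix m n ℂ) (k : Fin N → m)
    (l : Fin N → n) : perm (fun i j => A (k i) (l j)) = (A.submatrix k l).permanent :=
  Matrix.permanent_transpose (A.submatrix k l)

theorem haar_average_permanents_general {ι n : Type*} [Fintype ι] [DecidableEq ι] [Fintype n]
    [DecidableEq n] [Nonempty n] [MeasurableSpace (Matrix.unitaryGroup n ℂ)]
    [BorelSpace (Matrix.unitaryGroup n ℂ)] (μ : Measure (Matrix.unitaryGroup n ℂ))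
    [μ.IsHaarMeasure] [IsProbabilityMeasure μ] (k k' l l' : ι → n) :
    ∫ U : Matrix.unitaryGroup n ℂ, ((U : Matrix n n ℂ).submatrix k l).permanent *
        conj ((U : Matrix n n ℂ).submatrix k' l').permanent ∂μ =
      if (∀ p, #{i | k i = p} = #{i | k' i = p}) ∧ ∀ p, #{j | l j = p} = #{j | l' j = p} then
        (∏ p, ((#{i | k i = p}).factorial : ℂ)) * (∏ p, ((#{j | l j = p}).factorial : ℂ)) *
          (Fintype.card ι).factorial * (Fintype.card n - 1).factorial /
            (Fintype.card n + Fintype.card ι - 1).factorial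
      else 0 := by
  have := isInvInvariant_of_isProbabilityMeasure μ
  have choose_mul : (Fintype.card n + Fintype.card ι - 1).choose (Fintype.card ι) *
      (Fintype.card ι).factorial * (Fintype.card n - 1).factorial =
        (Fintype.card n + Fintype.card ι - 1).factorial := by
    have card_pos := Fintype.card_pos (α := n)
    rw [show Fintype.card n - 1 = Fintype.card n + Fintype.card ι - 1 - Fintype.card ι by omega]
    exact Nat.choose_mul_factorial_mul_factorial (by omega)
  rw [← permanentCorr, permanentCorr_eq_ite, permanentCorr_self]
  refine if_congr (by simp only [DFunLike.ext_iff, content_apply]) ?_ rfl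
  rw [prod_factorial_eq_div, prod_factorial_eq_div, ← choose_mul]
  have factorial_ne (a : ℕ) : (a.factorial : ℂ) ≠ 0 := Nat.cast_ne_zero.2 a.factorial_ne_zero
  push_cast
  field_simp [factorial_ne]

/-- Haar average over the unitary group `U(M)` of a product of a permanent and the
conjugate of another permanent, for submatrices built on index tuples
`k, k', l : Fin N → Fin M`. With `n_p = #{i : kᵢ = p}`, `m_p = #{i : k'ᵢ = p}` and
`s_p = #{j : lⱼ = p}`, it equals `(∏_p n_p!)·(∏_p s_p!)·N!·(M-1)!/(M+N-1)!` when
`n = m`, and `0` otherwise. -/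
theorem haar_average_permanents
    (M N : ℕ) (hM : 1 ≤ M) (hN : 1 ≤ N)
    [MeasurableSpace (Matrix.unitaryGroup (Fin M) ℂ)]
    [BorelSpace (Matrix.unitaryGroup (Fin M) ℂ)]
    (μ : Measure (Matrix.unitaryGroup (Fin M) ℂ))
    [μ.IsHaarMeasure] [IsProbabilityMeasure μ]
    (k k' l : Fin N → Fin M) :
    ∫ U : Matrix.unitaryGroup (Fin M) ℂ,
        perm (fun i j => (U : Matrix (Fin M) (Fin M) ℂ) (k i) (l j)) *
          (starRingEnd ℂ) (perm (fun i j => (U : Matrix (Fin M) (Fin M) ℂ) (k' i) (l j))) ∂μ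
    = if ∀ p : Fin M,
          ({i | k i = p} : Finset (Fin N)).card = ({i | k' i = p} : Finset (Fin N)).card
      then (∏ p : Fin M, (({i | k i = p} : Finset (Fin N)).card.factorial : ℂ)) *
            (∏ p : Fin M, (({j | l j = p} : Finset (Fin N)).card.factorial : ℂ)) *
            (N.factorial : ℂ) * ((M - 1).factorial : ℂ) / ((M + N - 1).factorial : ℂ)
      else 0 := by
  have : Nonempty (Fin M) := ⟨⟨0, hM⟩⟩
  simpa [perm_eq_permanent_submatrix] using haar_average_permanents_general μ k k' l l
end

section
/- Let 1 ≤ N ≤ M be natural numbers, let U be Haar-distributed on the unitary group U(M) (the group of M×M complex unitary matrices with its Haar probability measure), and let k, k', l : Fin N → Fin M be strictly increasing index tuples. For an M×M matrix U define the N×N matrices A(U)_{ij} = U_{k_i, l_j} and B(U)_{ij} = U_{k'_i, l_j}. Then ∫ det(A(U)) · conj(det(B(U))) dU equals N! · (M−N)!/M! if k = k', and equals 0 otherwise. -/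
open MeasureTheory Finset

/-!
For `N`-tuples `f`, write `D f` for the minor of `U` with rows `f` and columns `l`. Multiplying `U`
on the left by a permutation matrix permutes its rows, so the average of `|D f|²` is the same for
all injective `f`. By Cauchy–Binet the sum of `|D f|²` over all `f` is
`N! det ((U* U)[l, l]) = N!`, which determines the common value. Multiplying `U` on the left by the
diagonal matrix that flips the sign of one row occurring in `k` but not in `k'` negates
`D k * conj (D k')`, so its average vanishes. Since only signed permutation matrices are used, the
same argument covers the orthogonal group.
-/

lemma exists_perm_comp_eq_of_range_subset {ι α : Type*} [Finite ι] {k k' : ι → α}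
    (hk : Function.Injective k) (h : Set.range k ⊆ Set.range k') :
    ∃ σ : Equiv.Perm ι, k' ∘ σ = k := by
  obtain ⟨g, rfl⟩ := Set.range_subset_range_iff_exists_comp.1 h
  exact ⟨.ofBijective g (Finite.injective_iff_bijective.1 hk.of_comp), rfl⟩

section Minor

open Matrix Equiv

variable {R m n ι : Type*} [CommRing R] [Fintype ι] [DecidableEq ι]

lemma det_submatrix_eq_zero_of_not_injective (A : Matrix m n R) {k : ι → m} (l : ι → n)
    (hk : ¬ Function.Injective k) : (A.submatrix k l).det = 0 := by
  obtain ⟨i, j, hij, hne⟩ := Function.not_injective_iff.1 hk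
  exact det_zero_of_row_eq hne <| by ext; simp only [submatrix_apply, hij]

lemma det_submatrix_comp_perm (A : Matrix m n R) (k : ι → m) (l : ι → n) (σ : Perm ι) :
    (A.submatrix (k ∘ σ) l).det = Perm.sign σ * (A.submatrix k l).det :=
  det_permute σ (A.submatrix k l)

lemma det_one_submatrix_eq_zero_of_notMem_range [DecidableEq m] {k k' : ι → m} {i : ι}
    (hi : k i ∉ Set.range k') : ((1 : Matrix m m R).submatrix k k').det = 0 :=
  det_eq_zero_of_row_eq_zero i fun j ↦ one_apply_ne fun h ↦ hi ⟨j, h.symm⟩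

lemma det_one_submatrix_of_strictMono [DecidableEq m] {κ : Type*} [LinearOrder κ] [Fintype κ]
    [PartialOrder m] {k k' : κ → m} (hk : StrictMono k) (hk' : StrictMono k') :
    ((1 : Matrix m m R).submatrix k k').det = if k = k' then 1 else 0 := by
  split_ifs with hkk'
  · rw [hkk', submatrix_one _ hk'.injective, det_one]
  · have hrange : ¬ Set.range k ⊆ Set.range k' := fun h ↦ hkk' <| by
      obtain ⟨σ, rfl⟩ := exists_perm_comp_eq_of_range_subset hk.injective h
      exact (hk.range_inj hk').1 (EquivLike.range_comp k' σ)
    obtain ⟨_, ⟨i, rfl⟩, hi⟩ := Set.not_subset.1 hrange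
    exact det_one_submatrix_eq_zero_of_notMem_range hi

lemma det_submatrix_diagonal_mul [Fintype m] [DecidableEq m] (d : m → R) (A : Matrix m n R)
    (k : ι → m) (l : ι → n) :
    ((diagonal d * A).submatrix k l).det = (∏ i, d (k i)) * (A.submatrix k l).det := by
  rw [← det_mul_column]
  congr 1
  ext i j
  simp only [submatrix_apply, diagonal_mul, of_apply]

variable [Fintype n]

lemma det_mul_eq_sum_prod_mul_det (A : Matrix ι n R) (B : Matrix n ι R) :
    (A * B).det = ∑ f : ι → n, (∏ i, A i (f i)) * (B.submatrix f id).det := by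
  have rows_mul : A * B = fun i ↦ ∑ j, A i j • B j := by
    ext i j
    simp [mul_apply]
  rw [rows_mul]
  exact (detRowAlternating.toMultilinearMap.map_sum fun i j ↦ A i j • B j).trans <|
    Finset.sum_congr rfl fun f _ ↦
      detRowAlternating.toMultilinearMap.map_smul_univ (fun i ↦ A i (f i)) fun i ↦ B (f i)

/-- The Cauchy–Binet formula: summing over tuples rather than sets of indices counts each set
`(card ι)!` times and avoids choosing an order on `n`. -/
lemma factorial_card_mul_det_mul (A : Matrix ι n R) (B : Matrix n ι R) :
    ((Fintype.card ι).factorial : R) * (A * B).det =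
      ∑ f : ι → n, (A.submatrix id f).det * (B.submatrix f id).det := by
  have expand (f : ι → n) : (A.submatrix id f).det * (B.submatrix f id).det =
      ∑ σ : Perm ι, (∏ i, A i ((f ∘ σ) i)) * (B.submatrix (f ∘ σ) id).det := by
    rw [← det_transpose, det_apply', Finset.sum_mul]
    refine Finset.sum_congr rfl fun σ _ ↦ ?_
    rw [det_submatrix_comp_perm]
    simp only [transpose_apply, submatrix_apply, id_eq, Function.comp_apply]
    ring
  have reindex (σ : Perm ι) :
      ∑ f : ι → n, (∏ i, A i ((f ∘ σ) i)) * (B.submatrix (f ∘ σ) id).det = (A * B).det := by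
    rw [det_mul_eq_sum_prod_mul_det]
    exact (σ.symm.arrowCongr (Equiv.refl n)).sum_comp
      fun f ↦ (∏ i, A i (f i)) * (B.submatrix f id).det
  simp_rw [expand]
  rw [Finset.sum_comm]
  simp_rw [reindex]
  rw [Finset.sum_const, Finset.card_univ, Fintype.card_perm, nsmul_eq_mul]

end Minor

section UnitaryGroup

open Matrix Equiv

section StarRing

variable {R n : Type*} [CommRing R] [StarRing R] [Fintype n] [DecidableEq n]

lemma permMatrix_mem_unitaryGroup (σ : Perm n) : σ.permMatrix R ∈ unitaryGroup n R := by
  rw [mem_unitaryGroup_iff, star_eq_conjTranspose, conjTranspose_permMatrix, ← permMatrix_mul,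
    inv_mul_cancel, permMatrix_one]

lemma diagonal_mem_unitaryGroup_s18 {d : n → R} (hd : ∀ i, d i ∈ unitary R) :
    diagonal d ∈ unitaryGroup n R := by
  rw [mem_unitaryGroup_iff, star_eq_conjTranspose, diagonal_conjTranspose, diagonal_mul_diagonal,
    ← diagonal_one]
  exact congrArg diagonal <| funext fun i ↦ Unitary.mul_star_self_of_mem (hd i)

lemma sum_det_submatrix_mul_conj {ι : Type*} [Fintype ι] [DecidableEq ι] {l : ι → n}
    (hl : Function.Injective l) (U : unitaryGroup n R) :
    ∑ f : ι → n, (U.1.submatrix f l).det * starRingEnd R (U.1.submatrix f l).det =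
      (Fintype.card ι).factorial := by
  have columns_orthonormal : (star U.1).submatrix l id * U.1.submatrix id l = 1 := by
    rw [← submatrix_mul _ _ _ _ _ Function.bijective_id, mem_unitaryGroup_iff'.1 U.2,
      submatrix_one _ hl]
  have cauchyBinet :=
    factorial_card_mul_det_mul ((star U.1).submatrix l id) (U.1.submatrix id l)
  rw [columns_orthonormal, det_one, mul_one] at cauchyBinet
  rw [cauchyBinet]
  refine Finset.sum_congr rfl fun f _ ↦ ?_
  rw [starRingEnd_apply, ← det_conjTranspose, mul_comm]
  rfl

end StarRing

instance compactSpace_unitaryGroup {𝕜 n : Type*} [RCLike 𝕜] [Fintype n] [DecidableEq n] :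
    CompactSpace (unitaryGroup n 𝕜) := by
  refine isCompact_iff_compactSpace.1 <|
    (isCompact_closedBall (0 : 𝕜) 1).matrix.of_isClosed_subset isClosed_unitary fun A hA i j ↦ ?_
  rw [mem_closedBall_zero_iff]
  exact entry_norm_bound_of_unitary hA i j

end UnitaryGroup

section Average

open Matrix Equiv

variable {𝕜 n ι : Type*} [RCLike 𝕜] [Fintype n] [DecidableEq n] [Fintype ι] [DecidableEq ι]
  [MeasurableSpace (unitaryGroup n 𝕜)] (μ : Measure (unitaryGroup n 𝕜)) (l k k' : ι → n)

/-- The correlation of two minors of a `μ`-random unitary matrix: the average of the minor with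
rows `k` times the conjugate of the minor with rows `k'`, both with columns `l`. The tuples need not
be monotone or injective. -/
noncomputable def minorCorrelation : 𝕜 :=
  ∫ U : unitaryGroup n 𝕜,
    (U.1.submatrix k l).det * starRingEnd 𝕜 (U.1.submatrix k' l).det ∂μ

variable {k} in
lemma minorCorrelation_eq_zero_of_not_injective (hk : ¬ Function.Injective k) :
    minorCorrelation μ l k k' = 0 := by
  simp only [minorCorrelation, det_submatrix_eq_zero_of_not_injective _ _ hk, zero_mul,
    integral_zero]

lemma minorCorrelation_comp_perm (σ : Perm ι) :
    minorCorrelation μ l (k ∘ σ) k' = Perm.sign σ * minorCorrelation μ l k k' := by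
  simp only [minorCorrelation, det_submatrix_comp_perm, mul_assoc, integral_const_mul]

variable [BorelSpace (unitaryGroup n 𝕜)]

lemma integrable_det_submatrix_mul_conj [IsFiniteMeasure μ] :
    Integrable (fun U : unitaryGroup n 𝕜 ↦
      (U.1.submatrix k l).det * starRingEnd 𝕜 (U.1.submatrix k' l).det) μ := by
  have continuous_minor (f : ι → n) :
      Continuous fun U : unitaryGroup n 𝕜 ↦ (U.1.submatrix f l).det :=
    (continuous_subtype_val.matrix_submatrix f l).matrix_det
  exact ((continuous_minor k).mul (RCLike.continuous_conj.comp (continuous_minor k')))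
    |>.integrable_of_hasCompactSupport (.of_compactSpace _)

lemma sum_minorCorrelation_self [IsProbabilityMeasure μ] {l : ι → n} (hl : Function.Injective l) :
    ∑ f : ι → n, minorCorrelation μ l f f = (Fintype.card ι).factorial := by
  simp only [minorCorrelation]
  rw [← integral_finsetSum _ fun f _ ↦ integrable_det_submatrix_mul_conj μ l f f]
  simp only [sum_det_submatrix_mul_conj hl, integral_const, probReal_univ, one_smul]

variable [μ.IsMulLeftInvariant]

lemma minorCorrelation_perm_comp (π : Perm n) :
    minorCorrelation μ l (π ∘ k) (π ∘ k') = minorCorrelation μ l k k' := by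
  have minor_perm_mul (U : unitaryGroup n 𝕜) (f : ι → n) :
      U.1.submatrix (π ∘ f) l = (π.permMatrix 𝕜 * U.1).submatrix f l := by
    rw [PEquiv.toMatrix_toPEquiv_mul, submatrix_submatrix, Function.id_comp]
  simp only [minorCorrelation, minor_perm_mul]
  exact integral_mul_left_eq_self
    (fun U : unitaryGroup n 𝕜 ↦
      (U.1.submatrix k l).det * starRingEnd 𝕜 (U.1.submatrix k' l).det)
    (⟨_, permMatrix_mem_unitaryGroup π⟩ : unitaryGroup n 𝕜)

variable {k k'}

lemma minorCorrelation_eq_zero_of_notMem_range (hk : Function.Injective k) {i : ι}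
    (hi : k i ∉ Set.range k') : minorCorrelation μ l k k' = 0 := by
  let signs : n → 𝕜 := Function.update 1 (k i) (-1)
  have signs_mem_unitary (a : n) : signs a ∈ unitary 𝕜 := by
    by_cases h : a = k i <;> simp [signs, h, Unitary.mem_iff]
  have prod_signs_k : ∏ j, signs (k j) = -1 := by
    simp [signs, Function.update_apply, hk.eq_iff]
  have prod_signs_k' : ∏ j, signs (k' j) = 1 :=
    Finset.prod_eq_one fun j _ ↦ Function.update_of_ne (fun h ↦ hi ⟨j, h⟩) _ _
  refine integral_eq_zero_of_mul_left_eq_neg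
    (g := (⟨_, diagonal_mem_unitaryGroup_s18 signs_mem_unitary⟩ : unitaryGroup n 𝕜)) fun U ↦ ?_
  simp only [Submonoid.coe_mul, det_submatrix_diagonal_mul, prod_signs_k, prod_signs_k', one_mul,
    neg_mul]

lemma minorCorrelation_self_eq (hk : Function.Injective k) (hk' : Function.Injective k') :
    minorCorrelation μ l k k = minorCorrelation μ l k' k' := by
  obtain ⟨π, hπ⟩ := Perm.exists_extending_pair k' k hk' hk
  rw [← minorCorrelation_perm_comp μ l k' k' π, show π ∘ k' = k from funext hπ]

lemma minorCorrelation_self [IsProbabilityMeasure μ] {l : ι → n} (hl : Function.Injective l)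
    (hk : Function.Injective k) :
    minorCorrelation μ l k k = ((Fintype.card n).choose (Fintype.card ι) : 𝕜)⁻¹ := by
  have card_injective : #{f : ι → n | Function.Injective f} =
      (Fintype.card ι).factorial * (Fintype.card n).choose (Fintype.card ι) := by
    rw [← Fintype.card_subtype, Fintype.card_congr (subtypeInjectiveEquivEmbedding ι n),
      Fintype.card_embedding_eq, Nat.descFactorial_eq_factorial_mul_choose]
  have sum_eq : ∑ f : ι → n, minorCorrelation μ l f f =
      #{f : ι → n | Function.Injective f} * minorCorrelation μ l k k := by
    rw [← nsmul_eq_mul, ← Finset.sum_const, Finset.sum_filter]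
    refine Finset.sum_congr rfl fun f _ ↦ ?_
    split_ifs with hf
    · exact minorCorrelation_self_eq μ l hf hk
    · exact minorCorrelation_eq_zero_of_not_injective μ l f hf
  rw [sum_minorCorrelation_self μ hl, card_injective, Nat.cast_mul, mul_assoc] at sum_eq
  exact eq_inv_of_mul_eq_one_right <|
    (mul_eq_left₀ (Nat.cast_ne_zero.2 (Nat.factorial_ne_zero _))).1 sum_eq.symm

variable (k k')

theorem haar_average_determinants_general [IsProbabilityMeasure μ] {l : ι → n}
    (hl : Function.Injective l) :
    ∫ U : unitaryGroup n 𝕜,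
        (U.1.submatrix k l).det * starRingEnd 𝕜 (U.1.submatrix k' l).det ∂μ =
      ((1 : Matrix n n 𝕜).submatrix k k').det / (Fintype.card n).choose (Fintype.card ι) := by
  change minorCorrelation μ l k k' = _
  by_cases hk : Function.Injective k
  swap
  · rw [minorCorrelation_eq_zero_of_not_injective μ l k' hk,
      det_submatrix_eq_zero_of_not_injective _ _ hk, zero_div]
  by_cases hrange : Set.range k ⊆ Set.range k'
  · obtain ⟨σ, rfl⟩ := exists_perm_comp_eq_of_range_subset hk hrange
    have hk' : Function.Injective k' := (σ.injective_comp k').1 hk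
    rw [minorCorrelation_comp_perm, minorCorrelation_self μ hl hk', det_submatrix_comp_perm,
      submatrix_one _ hk', det_one, mul_one, div_eq_mul_inv]
  · obtain ⟨_, ⟨i, rfl⟩, hi⟩ := Set.not_subset.1 hrange
    rw [minorCorrelation_eq_zero_of_notMem_range μ l hk hi,
      det_one_submatrix_eq_zero_of_notMem_range hi, zero_div]

end Average

/-- Haar average over the unitary group `U(M)` of a product of a determinant and the
conjugate of another determinant, for submatrices built on strictly increasing index
tuples `k, k', l : Fin N → Fin M`: it equals `N!·(M-N)!/M!` when `k = k'`,
and `0` otherwise. -/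
theorem haar_average_determinants
    (M N : ℕ) (hN : 1 ≤ N) (hNM : N ≤ M)
    [MeasurableSpace (Matrix.unitaryGroup (Fin M) ℂ)]
    [BorelSpace (Matrix.unitaryGroup (Fin M) ℂ)]
    (μ : Measure (Matrix.unitaryGroup (Fin M) ℂ))
    [μ.IsHaarMeasure] [IsProbabilityMeasure μ]
    (k k' l : Fin N → Fin M)
    (hk : StrictMono k) (hk' : StrictMono k') (hl : StrictMono l) :
    ∫ U : Matrix.unitaryGroup (Fin M) ℂ,
        Matrix.det (Matrix.of fun i j => (U : Matrix (Fin M) (Fin M) ℂ) (k i) (l j)) *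
          (starRingEnd ℂ)
            (Matrix.det (Matrix.of fun i j => (U : Matrix (Fin M) (Fin M) ℂ) (k' i) (l j))) ∂μ
    = if k = k' then (N.factorial : ℂ) * ((M - N).factorial : ℂ) / (M.factorial : ℂ)
      else 0 :=
  (haar_average_determinants_general μ k k' hl.injective).trans <| by
    simp [det_one_submatrix_of_strictMono hk hk', ite_div, Nat.cast_choose ℂ hNM]
end
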